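/- arXiv:2604.27778 — 6 statements merged into one kernel-verified Lean document; each statement's English description precedes it below -/
import Mathlib

section
/- Let 0 < α < 1 and let m be a positive integer. Let τ : ∂𝔻 → U(m) be a Hölder continuous map of exponent α with values in the unitary group. Then there exist a continuous map Θ from the closed unit disc 𝔻̄ to the m×m complex matrices that is holomorphic on the open disc 𝔻 and takes invertible values at every point of 𝔻̄, together with a nonincreasing sequence of integers κ₁ ≥ … ≥ κ_m, such that for every ζ ∈ ∂𝔻 there exists a diagonal complex matrix D(ζ) with D(ζ)_{ii}² = ζ^{κ_i} for each i, for which the real subspaces {τ(ζ)·x : x ∈ ℝ^m} and {Θ(ζ)·D(ζ)·x : x ∈ ℝ^m} of ℂ^m coincide. -/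
/-!
The real subspace `τ(ζ)·ℝ^m` is the fixed space of the conjugation `v ↦ G(ζ) * conj v`, where
`G = τ * τᵀ` satisfies `G * bar G = 1` (`bar` is entrywise conjugation). More generally, an invertible
`A` with `G * bar A = A` spans this subspace over the reals (`range_eq_fixed`). It is therefore enough
to find `Θ`, invertible on the closed disc and holomorphic inside, with `G * bar Θ = Θ * Λ` on the
circle, where `Λ(ζ) = diag(ζ ^ κ i)`: if `D ^ 2 = Λ`, then `D` is unimodular and `A = Θ * D` satisfies
`G * bar A = A` (`mul_bar_mul_diagonal`).

Such a `Θ` comes from a Birkhoff factorization `G(ζ) = A(ζ) * Λ(ζ) * B(conj ζ)` with `A`, `B`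
invertible and holomorphic (`exists_birkhoff`). The relation `G * bar G = 1` shows that `A` and the
inverse of `K(z) = bar (B (conj z))` are exchanged by the conjugation, and a combination
`u • A + u⁻¹ • K⁻¹` with `u` unimodular and generic is the required `Θ` (`exists_symmetric_factor`).

The Birkhoff factorization rests on three facts.

* Privalov's theorem: a Hölder function on the circle is the sum of the boundary values of a
  holomorphic and an antiholomorphic function, boundedly in the Hölder norm (`exists_bd_bound`,
  `bd_add_conj`). It is proved through the Herglotz integral and the Hardy–Littlewood lemma. A loop
  close to `1` is then factored by a contraction argument (`exists_factor_near_one`).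
* Approximation: a Hölder loop is uniformly close to a trigonometric polynomial with the same Hölder
  constant (`exists_trig_approx`), hence close to it in the Hölder norm of half the exponent
  (`Hol.of_small`). This reduces the problem to `ζ ^ (-n)` times a polynomial matrix times an
  invertible holomorphic one.
* Column reduction: the zeros of the determinant in the disc are removed one at a time, each step
  raising one exponent (`exists_column_step`, `exists_reduce`).

Antiholomorphic functions of `z` are written throughout as holomorphic functions of `conj z`.
-/

namespace OhSplitting

open Complex Metric Real Filter Topology
open scoped Matrix

/-! ### An estimate for the squared Cauchy kernel -/

/-- The circle average of `‖w - r * ζ‖ ^ (β - 2)` is of order `(1 - r) ^ (β - 1)`: at angular distance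
`t` from `ζ` the norm is comparable to `(1 - r) + |t|`. -/
theorem exists_kernel_bound {β : ℝ} (h1 : β < 1) :
    ∃ C : ℝ, 0 ≤ C ∧ ∀ r : ℝ, 0 ≤ r → r < 1 → ∀ ζ ∈ sphere (0 : ℂ) 1,
      circleAverage (fun w => ‖w - r * ζ‖ ^ (β - 2)) 0 1 ≤ C * (1 - r) ^ (β - 1) := by
  have hπ := Real.pi_pos
  refine ⟨(2 * π)⁻¹ * ((2 * π) ^ (2 - β) * (2 / (1 - β))), by
    have : 0 < 1 - β := by linarith
    positivity, ?_⟩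
  intro r hr0 hr1 ζ hζ
  have hδ : 0 < 1 - r := by linarith
  set δ := 1 - r with hδd
  have hζn : ‖ζ‖ = 1 := by simpa using hζ
  rw [circleAverage_eq_integral_add (arg ζ - π), smul_eq_mul, mul_assoc]
  refine mul_le_mul_of_nonneg_left ?_ (by positivity)
  have hpt : ∀ θ ∈ Set.Icc (0 : ℝ) (2 * π),
      ‖circleMap 0 1 (θ + (arg ζ - π)) - r * ζ‖ ^ (β - 2) ≤
        (2 * π) ^ (2 - β) * (δ + |θ - π|) ^ (β - 2) := by
    intro θ hθ
    have e1 : circleMap 0 1 (θ + (arg ζ - π)) = ζ * exp (I * ((θ - π : ℝ) : ℂ)) := by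
      have hz : ζ = exp (arg ζ * I) := by
        conv_lhs => rw [← Complex.norm_mul_exp_arg_mul_I ζ, hζn]
        simp
      conv_rhs => rw [hz]
      rw [← Complex.exp_add, circleMap_zero]
      simp only [ofReal_one, one_mul]
      congr 1
      push_cast
      ring
    have e2 : ‖circleMap 0 1 (θ + (arg ζ - π)) - r * ζ‖ = ‖exp (I * ((θ - π : ℝ) : ℂ)) - r‖ := by
      rw [e1, show ζ * exp (I * ((θ - π : ℝ) : ℂ)) - r * ζ =
        ζ * (exp (I * ((θ - π : ℝ) : ℂ)) - r) by ring, norm_mul, hζn, one_mul]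
    rw [e2]
    set t := θ - π with ht
    have htπ : |t| ≤ π := abs_le.2 ⟨by linarith [hθ.1], by linarith [hθ.2]⟩
    have hn1 : ‖exp (I * (t : ℂ))‖ = 1 := by
      rw [mul_comm]; exact Complex.norm_exp_ofReal_mul_I t
    have hge1 : δ ≤ ‖exp (I * (t : ℂ)) - r‖ := by
      have := norm_sub_norm_le (exp (I * (t : ℂ))) (r : ℂ)
      rw [hn1, Complex.norm_of_nonneg hr0] at this
      exact this
    have hge2 : 2 / π * |t| ≤ ‖exp (I * (t : ℂ)) - 1‖ := by
      rw [Complex.norm_exp_I_mul_ofReal_sub_one, norm_mul, Real.norm_eq_abs, Real.norm_eq_abs]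
      have := Real.mul_abs_le_abs_sin (x := t / 2) (by rw [abs_div]; simp; linarith)
      rw [abs_div] at this
      simp only [Nat.abs_ofNat] at this ⊢
      calc 2 / π * |t| = 2 * (2 / π * (|t| / 2)) := by ring
        _ ≤ _ := by gcongr
    have hge3 : ‖exp (I * (t : ℂ)) - 1‖ ≤ 2 * ‖exp (I * (t : ℂ)) - r‖ := by
      have : ‖exp (I * (t : ℂ)) - 1‖ ≤ ‖exp (I * (t : ℂ)) - r‖ + ‖(r : ℂ) - 1‖ :=
        norm_sub_le_norm_sub_add_norm_sub _ _ _
      have h2 : ‖(r : ℂ) - 1‖ = δ := by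
        rw [show (r : ℂ) - 1 = -((δ : ℝ) : ℂ) by rw [hδd]; push_cast; ring, norm_neg,
          Complex.norm_of_nonneg hδ.le]
      linarith
    have hlow : (2 * π)⁻¹ * (δ + |t|) ≤ ‖exp (I * (t : ℂ)) - r‖ := by
      rw [inv_mul_le_iff₀ (by positivity)]
      have h3 : |t| ≤ π * ‖exp (I * (t : ℂ)) - r‖ := by
        have := hge2.trans hge3
        rw [div_mul_eq_mul_div, div_le_iff₀ hπ] at this
        linarith
      have : δ ≤ π * ‖exp (I * (t : ℂ)) - r‖ := by
        nlinarith [Real.pi_gt_three]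
      linarith
    calc ‖exp (I * (t : ℂ)) - r‖ ^ (β - 2) ≤ ((2 * π)⁻¹ * (δ + |t|)) ^ (β - 2) :=
          Real.rpow_le_rpow_of_nonpos (by positivity) hlow (by linarith)
      _ = _ := by
          rw [Real.mul_rpow (by positivity) (by positivity), Real.inv_rpow (by positivity),
            ← Real.rpow_neg (by positivity)]
          ring_nf
  have hcont : Continuous fun t : ℝ => (δ + |t|) ^ (β - 2) :=
    Continuous.rpow_const (by fun_prop) fun t => Or.inl (by positivity)
  have hint0 : ∫ t in (0 : ℝ)..π, (δ + t) ^ (β - 2) ≤ δ ^ (β - 1) / (1 - β) := by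
    rw [intervalIntegral.integral_comp_add_left (fun x => x ^ (β - 2)), add_zero,
      integral_rpow (Or.inr ⟨by linarith, by
        rw [Set.uIcc_of_le (by linarith)]; intro h; linarith [h.1]⟩)]
    rw [show β - 2 + 1 = -(1 - β) by ring, div_neg, ← neg_div, neg_sub]
    rw [show β - 1 = -(1 - β) by ring]
    have : 0 < 1 - β := by linarith
    gcongr
    have : 0 ≤ (δ + π) ^ (-(1 - β)) := by positivity
    linarith
  have hint1 : ∫ t in (0 : ℝ)..π, (δ + |t|) ^ (β - 2) ≤ δ ^ (β - 1) / (1 - β) := by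
    refine le_of_eq_of_le (intervalIntegral.integral_congr fun t ht => ?_) hint0
    rw [Set.uIcc_of_le hπ.le] at ht
    simp only [abs_of_nonneg ht.1]
  calc ∫ θ in (0 : ℝ)..2 * π, ‖circleMap 0 1 (θ + (arg ζ - π)) - r * ζ‖ ^ (β - 2)
      ≤ ∫ θ in (0 : ℝ)..2 * π, (2 * π) ^ (2 - β) * (δ + |θ - π|) ^ (β - 2) := by
        refine intervalIntegral.integral_mono_on (by positivity) ?_ ?_ hpt
        · refine Continuous.intervalIntegrable ?_ _ _
          refine Continuous.rpow_const (by fun_prop) fun θ => Or.inl ?_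
          have : circleMap 0 1 (θ + (arg ζ - π)) ≠ r * ζ := by
            intro h
            have := congrArg norm h
            rw [norm_circleMap_zero, norm_mul, hζn, Complex.norm_of_nonneg hr0] at this
            simp at this
            linarith
          exact norm_ne_zero_iff.2 (sub_ne_zero.2 this)
        · exact ((hcont.comp (continuous_id.sub continuous_const)).const_smul
            ((2 * π) ^ (2 - β))).intervalIntegrable _ _
    _ = (2 * π) ^ (2 - β) * ∫ t in (-π)..π, (δ + |t|) ^ (β - 2) := by
        rw [intervalIntegral.integral_const_mul,
          intervalIntegral.integral_comp_sub_right (fun t => (δ + |t|) ^ (β - 2))]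
        ring_nf
    _ ≤ (2 * π) ^ (2 - β) * (2 * (δ ^ (β - 1) / (1 - β))) := by
        refine mul_le_mul_of_nonneg_left ?_ (by positivity)
        rw [← intervalIntegral.integral_add_adjacent_intervals
          (hcont.intervalIntegrable (-π) 0) (hcont.intervalIntegrable 0 π)]
        have : ∫ t in (-π)..0, (δ + |t|) ^ (β - 2) = ∫ t in (0 : ℝ)..π, (δ + |t|) ^ (β - 2) := by
          have := intervalIntegral.integral_comp_neg (a := 0) (b := π)
            (fun t : ℝ => (δ + |t|) ^ (β - 2))
          simp only [abs_neg, neg_zero] at this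
          exact this.symm
        rw [this]
        linarith
    _ = _ := by ring

/-! ### Hölder functions on the circle and the Herglotz integral -/

section Herglotz

variable {E : Type*} [NormedAddCommGroup E]

/-- `Hol β M f`: on the unit circle `f` is bounded by `M` and is `β`-Hölder with constant `M`. -/
def Hol (β M : ℝ) (f : ℂ → E) : Prop :=
  (∀ ζ ∈ sphere (0 : ℂ) 1, ‖f ζ‖ ≤ M) ∧
    ∀ ζ ∈ sphere (0 : ℂ) 1, ∀ w ∈ sphere (0 : ℂ) 1, ‖f ζ - f w‖ ≤ M * ‖ζ - w‖ ^ β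

theorem Hol.nonneg {β M : ℝ} {f : ℂ → E} (hf : Hol β M f) : 0 ≤ M :=
  (norm_nonneg _).trans (hf.1 1 (by simp))

theorem Hol.mono {β M M' : ℝ} {f : ℂ → E} (hf : Hol β M f) (h : M ≤ M') : Hol β M' f :=
  ⟨fun ζ hζ => (hf.1 ζ hζ).trans h, fun ζ hζ w hw => (hf.2 ζ hζ w hw).trans
    (mul_le_mul_of_nonneg_right h (by positivity))⟩

theorem Hol.congr {β M : ℝ} {f g : ℂ → E} (hf : Hol β M f)
    (h : ∀ ζ ∈ sphere (0 : ℂ) 1, f ζ = g ζ) : Hol β M g :=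
  ⟨fun ζ hζ => h ζ hζ ▸ hf.1 ζ hζ, fun ζ hζ w hw => by
    rw [← h ζ hζ, ← h w hw]; exact hf.2 ζ hζ w hw⟩

theorem Hol.add {β M N : ℝ} {f g : ℂ → E} (hf : Hol β M f) (hg : Hol β N g) :
    Hol β (M + N) (fun z => f z + g z) := by
  refine ⟨fun ζ hζ => norm_add_le_of_le (hf.1 ζ hζ) (hg.1 ζ hζ), fun ζ hζ w hw => ?_⟩
  rw [add_sub_add_comm, add_mul]
  exact norm_add_le_of_le (hf.2 ζ hζ w hw) (hg.2 ζ hζ w hw)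

theorem Hol.neg {β M : ℝ} {f : ℂ → E} (hf : Hol β M f) : Hol β M (fun z => -f z) := by
  refine ⟨fun ζ hζ => by rw [norm_neg]; exact hf.1 ζ hζ, fun ζ hζ w hw => ?_⟩
  rw [← neg_sub', norm_neg]
  exact hf.2 ζ hζ w hw

theorem Hol.sub {β M N : ℝ} {f g : ℂ → E} (hf : Hol β M f) (hg : Hol β N g) :
    Hol β (M + N) (fun z => f z - g z) := by
  simpa [sub_eq_add_neg] using hf.add hg.neg

theorem Hol.mul {A : Type*} [NormedRing A] {β M N : ℝ} {f g : ℂ → A} (hf : Hol β M f)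
    (hg : Hol β N g) : Hol β (2 * M * N) (fun z => f z * g z) := by
  have hM := hf.nonneg
  have hN := hg.nonneg
  refine ⟨fun ζ hζ => ?_, fun ζ hζ w hw => ?_⟩
  · calc ‖f ζ * g ζ‖ ≤ ‖f ζ‖ * ‖g ζ‖ := norm_mul_le _ _
      _ ≤ M * N := mul_le_mul (hf.1 ζ hζ) (hg.1 ζ hζ) (norm_nonneg _) hM
      _ ≤ 2 * M * N := by nlinarith [mul_nonneg hM hN]
  · calc ‖f ζ * g ζ - f w * g w‖ = ‖(f ζ - f w) * g ζ + f w * (g ζ - g w)‖ := by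
          congr 1; noncomm_ring
      _ ≤ (M * ‖ζ - w‖ ^ β) * N + M * (N * ‖ζ - w‖ ^ β) := by
          refine norm_add_le_of_le ((norm_mul_le _ _).trans ?_) ((norm_mul_le _ _).trans ?_)
          · exact mul_le_mul (hf.2 ζ hζ w hw) (hg.1 ζ hζ) (norm_nonneg _) (by positivity)
          · exact mul_le_mul (hf.1 w hw) (hg.2 ζ hζ w hw) (norm_nonneg _) hM
      _ = _ := by ring

theorem conj_mem_sphere {ζ : ℂ} (h : ζ ∈ sphere (0 : ℂ) 1) :
    (starRingEnd ℂ) ζ ∈ sphere (0 : ℂ) 1 := by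
  simpa using h

theorem Hol.comp_conj {β M : ℝ} {f : ℂ → E} (hf : Hol β M f) :
    Hol β M (fun z => f ((starRingEnd ℂ) z)) := by
  refine ⟨fun ζ hζ => hf.1 _ (conj_mem_sphere hζ), fun ζ hζ w hw => ?_⟩
  refine (hf.2 _ (conj_mem_sphere hζ) _ (conj_mem_sphere hw)).trans (le_of_eq ?_)
  rw [← map_sub, Complex.norm_conj]

theorem Hol.continuousOn {β M : ℝ} (hβ : 0 < β) {f : ℂ → E} (hf : Hol β M f) :
    ContinuousOn f (sphere (0 : ℂ) 1) := by
  intro w hw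
  rw [ContinuousWithinAt, tendsto_iff_norm_sub_tendsto_zero]
  have h0 : Tendsto (fun ζ => M * ‖ζ - w‖ ^ β) (𝓝[sphere 0 1] w) (𝓝 0) := by
    have : Continuous fun ζ : ℂ => M * ‖ζ - w‖ ^ β :=
      continuous_const.mul (Continuous.rpow_const (by fun_prop) fun _ => Or.inr hβ.le)
    have h := this.tendsto w
    simp only [sub_self, norm_zero, Real.zero_rpow hβ.ne', mul_zero] at h
    exact h.mono_left nhdsWithin_le_nhds
  refine squeeze_zero' (Eventually.of_forall fun _ => norm_nonneg _) ?_ h0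
  filter_upwards [self_mem_nhdsWithin] with ζ hζ using hf.2 ζ hζ w hw

theorem Hol.circleIntegrable {β M : ℝ} (hβ : 0 < β) {f : ℂ → E} (hf : Hol β M f) :
    CircleIntegrable f 0 1 := (hf.continuousOn hβ).circleIntegrable zero_le_one

theorem norm_sub_le_two_mul {r : ℝ} (hr0 : 0 ≤ r) (hr1 : r < 1) {ζ w : ℂ}
    (hζ : ζ ∈ sphere (0 : ℂ) 1) (hw : w ∈ sphere (0 : ℂ) 1) : ‖w - ζ‖ ≤ 2 * ‖w - r * ζ‖ := by
  have hζn : ‖ζ‖ = 1 := by simpa using hζ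
  have hwn : ‖w‖ = 1 := by simpa using hw
  have h1 : ‖w - ζ‖ ≤ ‖w - r * ζ‖ + ‖r * ζ - ζ‖ := norm_sub_le_norm_sub_add_norm_sub _ _ _
  have h2 : ‖r * ζ - ζ‖ = 1 - r := by
    rw [show (r : ℂ) * ζ - ζ = -(((1 - r : ℝ) : ℂ) * ζ) by push_cast; ring, norm_neg, norm_mul,
      hζn, Complex.norm_of_nonneg (by linarith), mul_one]
  have h3 := norm_sub_norm_le w (r * ζ)
  rw [norm_mul, hζn, hwn, Complex.norm_of_nonneg hr0] at h3
  linarith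

theorem norm_sub_radial_pos {r : ℝ} (hr0 : 0 ≤ r) (hr1 : r < 1) {ζ w : ℂ}
    (hζ : ζ ∈ sphere (0 : ℂ) 1) (hw : w ∈ sphere (0 : ℂ) 1) : 0 < ‖w - r * ζ‖ := by
  have hζn : ‖ζ‖ = 1 := by simpa using hζ
  have hwn : ‖w‖ = 1 := by simpa using hw
  have h3 := norm_sub_norm_le w (r * ζ)
  rw [norm_mul, hζn, hwn, Complex.norm_of_nonneg hr0] at h3
  linarith

theorem kernel_integrable (β : ℝ) {r : ℝ} (hr0 : 0 ≤ r) (hr1 : r < 1) {ζ : ℂ}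
    (hζ : ζ ∈ sphere (0 : ℂ) 1) :
    CircleIntegrable (fun w => ‖w - r * ζ‖ ^ (β - 2)) 0 1 := by
  refine ContinuousOn.circleIntegrable zero_le_one ?_
  refine ContinuousOn.rpow_const (by fun_prop) fun w hw => Or.inl ?_
  exact (norm_sub_radial_pos hr0 hr1 hζ hw).ne'

/-- A second order kernel applied to a difference `f w - f ζ` of a Hölder function is bounded by
the kernel `‖w - rζ‖ ^ (β - 2)`. -/
theorem holder_div_sq_le {β M : ℝ} (hβ : 0 < β) {f : ℂ → E} (hf : Hol β M f) {r : ℝ}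
    (hr0 : 0 ≤ r) (hr1 : r < 1) {ζ w : ℂ}
    (hζ : ζ ∈ sphere (0 : ℂ) 1) (hw : w ∈ sphere (0 : ℂ) 1) :
    ‖f w - f ζ‖ / ‖w - r * ζ‖ ^ 2 ≤ 2 ^ β * M * ‖w - r * ζ‖ ^ (β - 2) := by
  have hp := norm_sub_radial_pos hr0 hr1 hζ hw
  have hM := hf.nonneg
  rw [Real.rpow_sub hp, div_eq_mul_inv, div_eq_mul_inv, ← mul_assoc]
  have : ‖w - r * ζ‖ ^ (2 : ℝ) = ‖w - r * ζ‖ ^ (2 : ℕ) := by norm_cast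
  rw [this]
  refine mul_le_mul_of_nonneg_right ?_ (by positivity)
  calc ‖f w - f ζ‖ ≤ M * ‖w - ζ‖ ^ β := hf.2 w hw ζ hζ
    _ ≤ M * (2 * ‖w - r * ζ‖) ^ β := by
        gcongr
        exact norm_sub_le_two_mul hr0 hr1 hζ hw
    _ = _ := by rw [Real.mul_rpow (by positivity) (by positivity)]; ring

variable [NormedSpace ℂ E]

theorem norm_circleAverage_le {g : ℂ → E} {h : ℂ → ℝ} (hh : CircleIntegrable h 0 1)
    (hle : ∀ w ∈ sphere (0 : ℂ) 1, ‖g w‖ ≤ h w) :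
    ‖circleAverage g 0 1‖ ≤ circleAverage h 0 1 := by
  have hπ := Real.pi_pos
  rw [circleAverage_def, circleAverage_def, norm_smul, smul_eq_mul, Real.norm_of_nonneg
    (by positivity)]
  refine mul_le_mul_of_nonneg_left ?_ (by positivity)
  refine intervalIntegral.norm_integral_le_of_norm_le (by positivity) ?_ hh
  exact Eventually.of_forall fun t _ => hle _ (by simp)

theorem sub_ne_zero_of_sphere_ball {w z : ℂ} (hw : w ∈ sphere (0 : ℂ) 1)
    (hz : z ∈ ball (0 : ℂ) 1) : w - z ≠ 0 := by
  intro h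
  rw [sub_eq_zero] at h
  simp only [mem_sphere_iff_norm, sub_zero, mem_ball_zero_iff] at hw hz
  rw [h] at hw
  exact absurd hw hz.ne

/-- The (halved) Herglotz integral of the boundary function `f`. On trigonometric polynomials it
keeps the positive frequencies, kills the negative ones and halves the constant term. -/
noncomputable def herg (f : ℂ → E) (z : ℂ) : E :=
  (1 / 2 : ℂ) • circleAverage (fun w => herglotzRieszKernel 0 z w • f w) 0 1

theorem herglotz_integrable {f : ℂ → E} (hf : CircleIntegrable f 0 1) {z : ℂ}
    (hz : z ∈ ball (0 : ℂ) 1) : CircleIntegrable (fun w => herglotzRieszKernel 0 z w • f w) 0 1 := by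
  have := hf.continuousOn_smul (continuousOn_herglotzRieszKernel_sphere hz)
  exact this

theorem herg_sub {f g : ℂ → E} (hf : CircleIntegrable f 0 1) (hg : CircleIntegrable g 0 1) {z : ℂ}
    (hz : z ∈ ball (0 : ℂ) 1) : herg (fun w => f w - g w) z = herg f z - herg g z := by
  simp only [herg]
  rw [← smul_sub, ← circleAverage_fun_sub (herglotz_integrable hf hz) (herglotz_integrable hg hz)]
  simp only [smul_sub]

theorem herg_congr {f g : ℂ → E} (h : ∀ ζ ∈ sphere (0 : ℂ) 1, f ζ = g ζ) : herg f = herg g := by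
  funext z
  simp only [herg]
  congr 1
  refine circleAverage_congr_sphere fun w hw => ?_
  rw [abs_one] at hw
  simp only [h w hw]

theorem circleAverage_sq_kernel {z : ℂ} (hz : z ∈ ball (0 : ℂ) 1) :
    circleAverage (fun w => 2 * w / (w - z) ^ 2) 0 1 = 0 := by
  rw [circleAverage_eq_circleIntegral one_ne_zero]
  have : (∮ w in C(0, 1), (w - 0)⁻¹ • (2 * w / (w - z) ^ 2)) =
      ∮ w in C(0, 1), (2 : ℂ) • (w - z) ^ (-2 : ℤ) := by
    refine circleIntegral.integral_congr zero_le_one fun w hw => ?_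
    have hw0 : w ≠ 0 := by rintro rfl; simp at hw
    have := sub_ne_zero_of_sphere_ball hw hz
    simp only [sub_zero, smul_eq_mul]
    rw [zpow_neg]
    field_simp
  rw [this, circleIntegral.integral_smul, circleIntegral.integral_sub_zpow_of_ne (by norm_num)]
  simp

/-- Every point of the disc lies on the radius ending at some point of the circle. -/
theorem exists_radial (z : ℂ) : ∃ ζ ∈ sphere (0 : ℂ) 1, z = (‖z‖ : ℂ) * ζ := by
  refine ⟨exp (arg z * I), by simp [Complex.norm_exp_ofReal_mul_I], ?_⟩
  rw [Complex.norm_mul_exp_arg_mul_I]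

/-- The derivative of the Herglotz integral of a `β`-Hölder function grows at most like
`(1 - ‖z‖) ^ (β - 1)`. The kernel `2 * w / (w - z) ^ 2` of the derivative has mean zero, so the value
of `f` at the radial projection of `z` can be subtracted under the integral. -/
theorem exists_herg_deriv_bound (E : Type*) [NormedAddCommGroup E] [NormedSpace ℂ E]
    [CompleteSpace E] {β : ℝ} (hβ : 0 < β) (hβ1 : β < 1) :
    ∃ C : ℝ, 0 ≤ C ∧ ∀ (f : ℂ → E) (M : ℝ), Hol β M f → ∀ z ∈ ball (0 : ℂ) 1,
      ∃ d : E, HasDerivAt (herg f) d z ∧ ‖d‖ ≤ C * M * (1 - ‖z‖) ^ (β - 1) := by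
  obtain ⟨C, hC0, hC⟩ := exists_kernel_bound hβ1
  refine ⟨2 ^ β * C, by positivity, fun f M hf z hz => ?_⟩
  have hM := hf.nonneg
  have hfi := hf.circleIntegrable hβ
  refine ⟨_, (hasDerivAt_circleAverage_herglotzRieszKernel_smul hfi hz).const_smul (1 / 2 : ℂ), ?_⟩
  obtain ⟨ζ, hζ, hzζ⟩ := exists_radial z
  have hr1 : ‖z‖ < 1 := by simpa using hz
  set r := ‖z‖ with hr
  have hr0 : 0 ≤ r := norm_nonneg z
  have hkc : ContinuousOn (fun w : ℂ => 2 * w / (w - z) ^ 2) (sphere (0 : ℂ) 1) := by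
    refine ContinuousOn.div (by fun_prop) (by fun_prop) fun w hw => ?_
    exact pow_ne_zero _ (sub_ne_zero_of_sphere_ball hw hz)
  have hkc' : ContinuousOn (fun w : ℂ => 2 * w / (w - z) ^ 2) (sphere (0 : ℂ) |1|) := by
    rwa [abs_one]
  -- subtracting the boundary value `f ζ` does not change the derivative
  have hsub : circleAverage (fun w => (2 * w / (w - z) ^ 2) • f w) 0 1 =
      circleAverage (fun w => (2 * w / (w - z) ^ 2) • (f w - f ζ)) 0 1 := by
    have h0 : circleAverage (fun w => (2 * w / (w - z) ^ 2) • f ζ) 0 1 = 0 := by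
      have := circleAverage_sq_kernel hz
      rw [circleAverage_def] at this ⊢
      rw [intervalIntegral.integral_smul_const, ← smul_assoc, this, zero_smul]
    simp only [smul_sub]
    rw [circleAverage_fun_sub, h0, sub_zero]
    · exact (hfi.continuousOn_smul (by simpa using hkc) :)
    · exact (hkc.smul continuousOn_const).circleIntegrable zero_le_one
  rw [hsub, norm_smul]
  have hki := (kernel_integrable β hr0 hr1 hζ).const_smul (a := 2 * (2 ^ β * M))
  have hbd : ‖circleAverage (fun w => (2 * w / (w - z) ^ 2) • (f w - f ζ)) 0 1‖ ≤
      2 * (2 ^ β * M) * (C * (1 - r) ^ (β - 1)) := by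
    refine (norm_circleAverage_le hki fun w hw => ?_).trans ?_
    · have hwn : ‖w‖ = 1 := by simpa using hw
      rw [norm_smul, norm_div, norm_mul, hwn, norm_pow, hzζ]
      have := holder_div_sq_le hβ hf hr0 hr1 hζ hw
      simp only [Pi.smul_apply, smul_eq_mul, Complex.norm_ofNat, mul_one]
      calc 2 / ‖w - r * ζ‖ ^ 2 * ‖f w - f ζ‖ = 2 * (‖f w - f ζ‖ / ‖w - r * ζ‖ ^ 2) := by ring
        _ ≤ 2 * (2 ^ β * M * ‖w - r * ζ‖ ^ (β - 2)) := by gcongr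
        _ = _ := by ring
    · rw [circleAverage_smul, smul_eq_mul]
      exact mul_le_mul_of_nonneg_left (hC r hr0 hr1 ζ hζ) (by positivity)
  calc ‖(1 / 2 : ℂ)‖ * _ ≤ (1 / 2) * (2 * (2 ^ β * M) * (C * (1 - r) ^ (β - 1))) := by
        have : ‖(1 / 2 : ℂ)‖ = 1 / 2 := by norm_num
        rw [this]
        gcongr
    _ = _ := by ring

end Herglotz

/-! ### Hölder continuity from the growth of the derivative -/

section HardyLittlewood

variable {E : Type*} [NormedAddCommGroup E] [NormedSpace ℂ E]

/-- Integration of the bound on the derivative along the radius through `z`. -/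
theorem radial_bound {β A : ℝ} (hβ : 0 < β) (hβ1 : β < 1) (hA : 0 ≤ A) {F F' : ℂ → E}
    (hF : ∀ z ∈ ball (0 : ℂ) 1, HasDerivAt F (F' z) z)
    (hF' : ∀ z ∈ ball (0 : ℂ) 1, ‖F' z‖ ≤ A * (1 - ‖z‖) ^ (β - 1))
    {h : ℝ} (h0 : 0 < h) (h1 : h ≤ 1) {z : ℂ} (hz : z ∈ ball (0 : ℂ) 1) :
    ‖F z - F ((1 - h : ℝ) * z)‖ ≤ A / β * h ^ β := by
  have hzn : ‖z‖ < 1 := by simpa using hz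
  have hmem : ∀ s ∈ Set.Icc (1 - h) 1, (s : ℂ) * z ∈ ball (0 : ℂ) 1 := by
    intro s hs
    rw [mem_ball_zero_iff, norm_mul, Complex.norm_of_nonneg (by linarith [hs.1])]
    nlinarith [hs.1, hs.2, norm_nonneg z]
  have hd : ∀ s ∈ Set.Icc (1 - h) 1,
      HasDerivAt (fun s : ℝ => F (s * z) - F ((1 - h : ℝ) * z)) (z • F' (s * z)) s := by
    intro s hs
    have e1 : HasDerivAt (fun s : ℝ => (s : ℂ) * z) z s := by
      simpa using (Complex.ofRealCLM.hasDerivAt (x := s)).mul_const z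
    exact ((hF _ (hmem s hs)).scomp s e1).sub_const _
  have key := image_norm_le_of_norm_deriv_right_le_deriv_boundary'
    (f := fun s : ℝ => F (s * z) - F ((1 - h : ℝ) * z)) (a := 1 - h) (b := 1)
    (f' := fun s => z • F' (s * z))
    (B := fun s => A / β * (h ^ β - (1 - s) ^ β)) (B' := fun s => A * (1 - s) ^ (β - 1))
    (fun s hs => (hd s hs).continuousAt.continuousWithinAt)
    (fun s hs => (hd s ⟨hs.1, hs.2.le⟩).hasDerivWithinAt) (by simp) ?_ ?_ ?_
    (Set.right_mem_Icc.2 (by linarith))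
  · simpa [Real.zero_rpow hβ.ne'] using key
  · refine ContinuousOn.mul continuousOn_const (continuousOn_const.sub ?_)
    exact ContinuousOn.rpow_const (by fun_prop) fun _ _ => Or.inr hβ.le
  · intro s hs
    have e2 : HasDerivAt (fun s : ℝ => 1 - s) (-1) s := (hasDerivAt_id s).const_sub 1
    have e3 := e2.rpow_const (p := β) (Or.inl (by linarith [hs.2]))
    refine ((e3.const_sub (h ^ β)).const_mul (A / β)).hasDerivWithinAt.congr_deriv ?_
    field_simp
  · intro s hs
    have hs0 : 0 ≤ s := by linarith [hs.1]
    rw [norm_smul]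
    have hb := hF' _ (hmem s ⟨hs.1, hs.2.le⟩)
    rw [norm_mul, Complex.norm_of_nonneg hs0] at hb
    have hm : (1 - s * ‖z‖) ^ (β - 1) ≤ (1 - s) ^ (β - 1) :=
      Real.rpow_le_rpow_of_nonpos (by linarith [hs.2]) (by nlinarith [norm_nonneg z])
        (by linarith)
    calc ‖z‖ * ‖F' (s * z)‖ ≤ 1 * (A * (1 - s * ‖z‖) ^ (β - 1)) := by gcongr
      _ ≤ A * (1 - s) ^ (β - 1) := by rw [one_mul]; gcongr

/-- The Hardy–Littlewood lemma: a derivative growing like `(1 - ‖z‖) ^ (β - 1)` forces `β`-Hölder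
continuity on the disc. With `h = min ‖z - w‖ 1`, the points are joined by moving both of them inwards
by the factor `1 - h`, and then along a segment at distance at least `h` from the circle. -/
theorem hardy_littlewood {β A : ℝ} (hβ : 0 < β) (hβ1 : β < 1) (hA : 0 ≤ A) {F F' : ℂ → E}
    (hF : ∀ z ∈ ball (0 : ℂ) 1, HasDerivAt F (F' z) z)
    (hF' : ∀ z ∈ ball (0 : ℂ) 1, ‖F' z‖ ≤ A * (1 - ‖z‖) ^ (β - 1))
    {z w : ℂ} (hz : z ∈ ball (0 : ℂ) 1) (hw : w ∈ ball (0 : ℂ) 1) :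
    ‖F z - F w‖ ≤ (2 / β + 1) * A * ‖z - w‖ ^ β := by
  rcases eq_or_ne z w with rfl | hne
  · simp [Real.zero_rpow hβ.ne']
  have hpos : 0 < ‖z - w‖ := norm_pos_iff.2 (sub_ne_zero.2 hne)
  obtain ⟨h, h0, h1, hle, hmid⟩ : ∃ h : ℝ, 0 < h ∧ h ≤ 1 ∧ h ≤ ‖z - w‖ ∧
      (1 - h) * ‖z - w‖ ≤ h := by
    rcases le_total ‖z - w‖ 1 with hh | hh
    · exact ⟨‖z - w‖, hpos, hh, le_rfl, by nlinarith⟩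
    · exact ⟨1, one_pos, le_rfl, hh, by simp⟩
  have hr1 := radial_bound hβ hβ1 hA hF hF' h0 h1 hz
  have hr2 := radial_bound hβ hβ1 hA hF hF' h0 h1 hw
  have hin : ∀ u ∈ ball (0 : ℂ) 1, ((1 - h : ℝ) : ℂ) * u ∈ closedBall (0 : ℂ) (1 - h) := by
    intro u hu
    have : ‖u‖ < 1 := by simpa using hu
    rw [mem_closedBall_zero_iff, norm_mul, Complex.norm_of_nonneg (by linarith)]
    nlinarith
  have hsub : closedBall (0 : ℂ) (1 - h) ⊆ ball 0 1 := closedBall_subset_ball (by linarith)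
  have hseg := Convex.norm_image_sub_le_of_norm_hasDerivWithin_le (f := F) (f' := F')
    (C := A * h ^ (β - 1))
    (fun u hu => (hF u (hsub hu)).hasDerivWithinAt) (fun u hu => (hF' u (hsub hu)).trans (by
      have hu' : ‖u‖ ≤ 1 - h := by simpa using hu
      refine mul_le_mul_of_nonneg_left ?_ hA
      exact Real.rpow_le_rpow_of_nonpos h0 (by linarith) (by linarith)))
    (convex_closedBall (0 : ℂ) (1 - h)) (hin w hw) (hin z hz)
  have hlen : ‖((1 - h : ℝ) : ℂ) * z - ((1 - h : ℝ) : ℂ) * w‖ ≤ h := by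
    rw [← mul_sub, norm_mul, Complex.norm_of_nonneg (by linarith)]
    exact hmid
  have hseg' : ‖F (((1 - h : ℝ) : ℂ) * z) - F (((1 - h : ℝ) : ℂ) * w)‖ ≤ A * h ^ β := by
    refine hseg.trans ?_
    calc A * h ^ (β - 1) * _ ≤ A * h ^ (β - 1) * h := by gcongr
      _ = A * h ^ β := by rw [mul_assoc, ← Real.rpow_add_one h0.ne']; ring_nf
  have htri : F z - F w = (F z - F (((1 - h : ℝ) : ℂ) * z)) +
      (F (((1 - h : ℝ) : ℂ) * z) - F (((1 - h : ℝ) : ℂ) * w)) -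
      (F w - F (((1 - h : ℝ) : ℂ) * w)) := by abel
  have hpow : h ^ β ≤ ‖z - w‖ ^ β := Real.rpow_le_rpow h0.le hle hβ.le
  calc ‖F z - F w‖ ≤ A / β * h ^ β + A * h ^ β + A / β * h ^ β := by
        rw [htri]
        exact norm_sub_le_of_le (norm_add_le_of_le hr1 hseg') hr2
    _ = (2 / β + 1) * A * h ^ β := by ring
    _ ≤ _ := by gcongr

end HardyLittlewood

/-! ### Boundary values of the Herglotz integral -/

section Boundary

variable {E : Type*} [NormedAddCommGroup E] [NormedSpace ℂ E]

/-- The Herglotz integral of `f`, extended by limits to the closed disc. -/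
noncomputable def bd (f : ℂ → E) (z : ℂ) : E := limUnder (𝓝[ball (0 : ℂ) 1] z) (herg f)

theorem bd_congr {f g : ℂ → E} (h : ∀ ζ ∈ sphere (0 : ℂ) 1, f ζ = g ζ) : bd f = bd g := by
  funext z
  rw [bd, bd, herg_congr h]

theorem nhdsWithin_ball_neBot {z : ℂ} (hz : z ∈ closedBall (0 : ℂ) 1) :
    (𝓝[ball (0 : ℂ) 1] z).NeBot := by
  rw [← mem_closure_iff_nhdsWithin_neBot, closure_ball _ one_ne_zero]
  exact hz

theorem exists_tendsto_of_holder {E : Type*} [NormedAddCommGroup E] [CompleteSpace E]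
    {β K : ℝ} (hβ : 0 < β) (hK : 0 ≤ K) {F : ℂ → E}
    (hF : ∀ z ∈ ball (0 : ℂ) 1, ∀ w ∈ ball (0 : ℂ) 1, ‖F z - F w‖ ≤ K * ‖z - w‖ ^ β)
    {z : ℂ} (hz : z ∈ closedBall (0 : ℂ) 1) : ∃ y, Tendsto F (𝓝[ball (0 : ℂ) 1] z) (𝓝 y) := by
  have := nhdsWithin_ball_neBot hz
  refine CompleteSpace.complete (f := map F (𝓝[ball (0 : ℂ) 1] z))
    (Metric.cauchy_iff.2 ⟨inferInstance, fun ε hε => ?_⟩)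
  have hc : Tendsto (fun δ : ℝ => K * (2 * δ) ^ β) (𝓝[>] 0) (𝓝 0) := by
    have : Continuous fun δ : ℝ => K * (2 * δ) ^ β :=
      continuous_const.mul (Continuous.rpow_const (by fun_prop) fun _ => Or.inr hβ.le)
    have h := this.tendsto 0
    simp only [mul_zero, Real.zero_rpow hβ.ne'] at h
    exact h.mono_left nhdsWithin_le_nhds
  obtain ⟨δ, hδε, hδ⟩ := ((hc.eventually_lt_const hε).and self_mem_nhdsWithin).exists
  have hδ : 0 < δ := hδ
  refine ⟨F '' (ball 0 1 ∩ ball z δ), image_mem_map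
    (inter_mem self_mem_nhdsWithin (mem_nhdsWithin_of_mem_nhds (ball_mem_nhds z hδ))), ?_⟩
  rintro _ ⟨u, ⟨hu, huz⟩, rfl⟩ _ ⟨v, ⟨hv, hvz⟩, rfl⟩
  rw [dist_eq_norm]
  refine ((hF u hu v hv).trans ?_).trans_lt hδε
  have : ‖u - v‖ ≤ 2 * δ := by
    rw [← dist_eq_norm]
    have h1 := dist_triangle_right u v z
    rw [mem_ball] at huz hvz
    linarith
  gcongr

/-- The Herglotz integral plus its reflection is the Poisson integral, since the Poisson kernel is the
real part of the Herglotz kernel. -/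
theorem herg_add_conj {f : ℂ → E} (hf : ContinuousOn f (sphere (0 : ℂ) 1)) {z : ℂ}
    (hz : z ∈ ball (0 : ℂ) 1) :
    herg f z + herg (fun w => f ((starRingEnd ℂ) w)) ((starRingEnd ℂ) z) =
      circleAverage (fun w => poissonKernel 0 z w • f w) 0 1 := by
  have hfi : CircleIntegrable f 0 1 := hf.circleIntegrable zero_le_one
  have hconj : circleAverage (fun w => herglotzRieszKernel 0 ((starRingEnd ℂ) z) w •
      f ((starRingEnd ℂ) w)) 0 1 =
      circleAverage (fun w => (starRingEnd ℂ) (herglotzRieszKernel 0 z w) • f w) 0 1 := by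
    rw [← circleAverage_zero_one_congr_inv]
    refine circleAverage_congr_sphere fun w hw => ?_
    have hwn : ‖w‖ = 1 := by simpa using hw
    have : w⁻¹ = (starRingEnd ℂ) w := Complex.inv_eq_conj hwn
    simp only [this, herglotzRieszKernel_def, Complex.conj_conj, map_div₀, map_add, map_sub,
      map_zero]
  have hkc := continuousOn_herglotzRieszKernel_sphere (R := 1) hz
  have hci : CircleIntegrable (fun w => (starRingEnd ℂ) (herglotzRieszKernel 0 z w) • f w) 0 1 := by
    have : ContinuousOn (fun w => (starRingEnd ℂ) (herglotzRieszKernel 0 z w)) (sphere 0 |1|) :=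
      Complex.continuous_conj.comp_continuousOn hkc
    exact hfi.continuousOn_smul this
  rw [herg, herg, hconj, ← smul_add,
    ← circleAverage_fun_add (herglotz_integrable hfi hz) hci]
  have : (fun w => herglotzRieszKernel 0 z w • f w +
      (starRingEnd ℂ) (herglotzRieszKernel 0 z w) • f w) =
      fun w => (2 : ℂ) • (poissonKernel 0 z w • f w) := by
    funext w
    rw [← add_smul, Complex.add_conj, poissonKernel_eq_re_herglotzRieszKernel, Function.comp_apply,
      ofReal_mul, mul_smul]
    simp
  rw [this, circleAverage_fun_smul, smul_smul]
  norm_num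

variable [CompleteSpace E]

/-- Privalov's theorem: for `β`-Hölder boundary data the Herglotz integral extends to a `β`-Hölder
function on the closed disc, with a bound linear in the data. -/
theorem exists_bd_bound (E : Type*) [NormedAddCommGroup E] [NormedSpace ℂ E]
    [CompleteSpace E] {β : ℝ} (hβ : 0 < β) (hβ1 : β < 1) :
    ∃ C : ℝ, 0 ≤ C ∧ ∀ (f : ℂ → E) (M : ℝ), Hol β M f →
      (∀ z ∈ closedBall (0 : ℂ) 1, Tendsto (herg f) (𝓝[ball (0 : ℂ) 1] z) (𝓝 (bd f z))) ∧
      DiffContOnCl ℂ (bd f) (ball 0 1) ∧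
      (∀ z ∈ closedBall (0 : ℂ) 1, ‖bd f z‖ ≤ C * M) ∧
      ∀ z ∈ closedBall (0 : ℂ) 1, ∀ w ∈ closedBall (0 : ℂ) 1,
        ‖bd f z - bd f w‖ ≤ C * M * ‖z - w‖ ^ β := by
  obtain ⟨C, hC0, hC⟩ := exists_herg_deriv_bound E hβ hβ1
  refine ⟨(2 / β + 1) * C + 1, by positivity, fun f M hf => ?_⟩
  have hM := hf.nonneg
  choose! F' hF' hF'' using hC f M hf
  have hhol := fun z (hz : z ∈ ball (0 : ℂ) 1) w (hw : w ∈ ball (0 : ℂ) 1) =>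
    hardy_littlewood hβ hβ1 (by positivity : 0 ≤ C * M) hF' hF'' hz hw
  have hK : 0 ≤ (2 / β + 1) * (C * M) := by positivity
  have hlim : ∀ z ∈ closedBall (0 : ℂ) 1,
      Tendsto (herg f) (𝓝[ball (0 : ℂ) 1] z) (𝓝 (bd f z)) := fun z hz =>
    tendsto_nhds_limUnder (exists_tendsto_of_holder hβ hK hhol hz)
  have heq : ∀ z ∈ ball (0 : ℂ) 1, bd f z = herg f z := by
    intro z hz
    have := nhdsWithin_ball_neBot (ball_subset_closedBall hz)
    exact tendsto_nhds_unique (hlim z (ball_subset_closedBall hz))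
      ((hF' z hz).continuousAt.continuousWithinAt)
  have hbhol : ∀ z ∈ closedBall (0 : ℂ) 1, ∀ w ∈ closedBall (0 : ℂ) 1,
      ‖bd f z - bd f w‖ ≤ (2 / β + 1) * (C * M) * ‖z - w‖ ^ β := by
    intro z hz w hw
    have := nhdsWithin_ball_neBot hz
    have := nhdsWithin_ball_neBot hw
    have t1 : Tendsto (fun p : ℂ × ℂ => ‖herg f p.1 - herg f p.2‖)
        (𝓝[ball (0 : ℂ) 1] z ×ˢ 𝓝[ball (0 : ℂ) 1] w) (𝓝 ‖bd f z - bd f w‖) :=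
      (((hlim z hz).comp tendsto_fst).sub ((hlim w hw).comp tendsto_snd)).norm
    have t2 : Tendsto (fun p : ℂ × ℂ => (2 / β + 1) * (C * M) * ‖p.1 - p.2‖ ^ β)
        (𝓝[ball (0 : ℂ) 1] z ×ˢ 𝓝[ball (0 : ℂ) 1] w)
        (𝓝 ((2 / β + 1) * (C * M) * ‖z - w‖ ^ β)) := by
      have hc : Continuous fun p : ℂ × ℂ => (2 / β + 1) * (C * M) * ‖p.1 - p.2‖ ^ β :=
        continuous_const.mul (Continuous.rpow_const (by fun_prop) fun _ => Or.inr hβ.le)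
      have h := hc.tendsto (z, w)
      rw [nhds_prod_eq] at h
      exact h.mono_left (Filter.prod_mono nhdsWithin_le_nhds nhdsWithin_le_nhds)
    refine le_of_tendsto_of_tendsto t1 t2 ?_
    filter_upwards [prod_mem_prod (self_mem_nhdsWithin (a := z) (s := ball (0 : ℂ) 1))
      (self_mem_nhdsWithin (a := w) (s := ball (0 : ℂ) 1))] with p hp
    exact hhol p.1 hp.1 p.2 hp.2
  have h0 : ‖bd f 0‖ ≤ M := by
    rw [heq 0 (by simp), herg, norm_smul]
    have h1 : ‖circleAverage (fun w => herglotzRieszKernel 0 0 w • f w) 0 1‖ ≤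
        circleAverage (fun _ => M) 0 1 := by
      refine norm_circleAverage_le (circleIntegrable_const _ _ _) fun w hw => ?_
      have hw0 : w ≠ 0 := by rintro rfl; simp at hw
      rw [herglotzRieszKernel_def]
      simpa [hw0] using hf.1 w hw
    rw [circleAverage_const] at h1
    have h2 : ‖(1 / 2 : ℂ)‖ = 1 / 2 := by norm_num
    rw [h2]
    linarith [norm_nonneg (circleAverage (fun w => herglotzRieszKernel 0 0 w • f w) 0 1)]
  refine ⟨hlim, DiffContOnCl.mk_ball ?_ ?_, ?_, ?_⟩
  · intro z hz
    have : DifferentiableOn ℂ (herg f) (ball 0 1) := fun u hu =>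
      (hF' u hu).differentiableAt.differentiableWithinAt
    exact (this.congr heq) z hz
  · intro w hw
    rw [ContinuousWithinAt, tendsto_iff_norm_sub_tendsto_zero]
    have hz0 : Tendsto (fun ζ => (2 / β + 1) * (C * M) * ‖ζ - w‖ ^ β)
        (𝓝[closedBall 0 1] w) (𝓝 0) := by
      have : Continuous fun ζ : ℂ => (2 / β + 1) * (C * M) * ‖ζ - w‖ ^ β :=
        continuous_const.mul (Continuous.rpow_const (by fun_prop) fun _ => Or.inr hβ.le)
      have h := this.tendsto w
      simp only [sub_self, norm_zero, Real.zero_rpow hβ.ne', mul_zero] at h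
      exact h.mono_left nhdsWithin_le_nhds
    refine squeeze_zero' (Eventually.of_forall fun _ => norm_nonneg _) ?_ hz0
    filter_upwards [self_mem_nhdsWithin] with ζ hζ using hbhol ζ hζ w hw
  · intro z hz
    have h1 := hbhol z hz 0 (by simp)
    have hz1 : ‖z - 0‖ ^ β ≤ 1 := Real.rpow_le_one (norm_nonneg _) (by simpa using hz) hβ.le
    calc ‖bd f z‖ ≤ ‖bd f z - bd f 0‖ + ‖bd f 0‖ := by
          simpa using norm_add_le (bd f z - bd f 0) (bd f 0)
      _ ≤ (2 / β + 1) * (C * M) * 1 + M := add_le_add (h1.trans (by gcongr)) h0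
      _ = _ := by ring
  · intro z hz w hw
    refine (hbhol z hz w hw).trans (mul_le_mul_of_nonneg_right ?_ (by positivity))
    linarith

theorem bd_sub {β : ℝ} (hβ : 0 < β) (hβ1 : β < 1) {f g : ℂ → E} {M N : ℝ} (hf : Hol β M f)
    (hg : Hol β N g) {z : ℂ} (hz : z ∈ closedBall (0 : ℂ) 1) :
    bd (fun w => f w - g w) z = bd f z - bd g z := by
  obtain ⟨C, -, hC⟩ := exists_bd_bound E hβ hβ1
  have := nhdsWithin_ball_neBot hz
  refine tendsto_nhds_unique ((hC _ _ (hf.sub hg)).1 z hz) ?_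
  refine (((hC _ _ hf).1 z hz).sub ((hC _ _ hg).1 z hz)).congr' ?_
  filter_upwards [self_mem_nhdsWithin] with u hu
  exact (herg_sub (hf.circleIntegrable hβ) (hg.circleIntegrable hβ) hu).symm

/-- The splitting of a Hölder function on the circle into the boundary values of a holomorphic
function and of an antiholomorphic one. -/
theorem bd_add_conj {β M : ℝ} (hβ : 0 < β) (hβ1 : β < 1) {f : ℂ → E} (hf : Hol β M f) {ζ : ℂ}
    (hζ : ζ ∈ sphere (0 : ℂ) 1) :
    bd f ζ + bd (fun w => f ((starRingEnd ℂ) w)) ((starRingEnd ℂ) ζ) = f ζ := by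
  obtain ⟨C, -, hC⟩ := exists_bd_bound E hβ hβ1
  obtain ⟨K, hK0, hK⟩ := exists_kernel_bound hβ1
  have hM := hf.nonneg
  have hζn : ‖ζ‖ = 1 := by simpa using hζ
  have hrad : ∀ ξ : ℂ, ‖ξ‖ = 1 →
      Tendsto (fun r : ℝ => (r : ℂ) * ξ) (𝓝[<] 1) (𝓝[ball (0 : ℂ) 1] ξ) := by
    intro ξ hξ
    refine tendsto_nhdsWithin_iff.2 ⟨?_, ?_⟩
    · have : Continuous fun r : ℝ => (r : ℂ) * ξ := by fun_prop
      have h := this.tendsto 1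
      simp only [ofReal_one, one_mul] at h
      exact h.mono_left nhdsWithin_le_nhds
    · filter_upwards [Ioo_mem_nhdsLT (zero_lt_one' ℝ)] with r hr
      rw [mem_ball_zero_iff, norm_mul, hξ, mul_one, Complex.norm_of_nonneg hr.1.le]
      exact hr.2
  have t1 := ((hC f M hf).1 ζ (sphere_subset_closedBall hζ)).comp (hrad ζ hζn)
  have t2 := ((hC _ M hf.comp_conj).1 _ (sphere_subset_closedBall (conj_mem_sphere hζ))).comp
    (hrad _ (by rw [Complex.norm_conj, hζn]))
  refine tendsto_nhds_unique (t1.add t2) ?_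
  rw [tendsto_iff_norm_sub_tendsto_zero]
  have t3 : Tendsto (fun r : ℝ => 2 * (2 ^ β * M) * K * (1 - r) ^ β) (𝓝[<] 1) (𝓝 0) := by
    have : Continuous fun r : ℝ => 2 * (2 ^ β * M) * K * (1 - r) ^ β :=
      continuous_const.mul (Continuous.rpow_const (by fun_prop) fun _ => Or.inr hβ.le)
    have h := this.tendsto 1
    simp only [sub_self, Real.zero_rpow hβ.ne', mul_zero] at h
    exact h.mono_left nhdsWithin_le_nhds
  refine squeeze_zero' (Eventually.of_forall fun _ => norm_nonneg _) ?_ t3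
  filter_upwards [Ioo_mem_nhdsLT (zero_lt_one' ℝ)] with r hr
  have hr0 := hr.1.le
  have hr1 := hr.2
  have hz : (r : ℂ) * ζ ∈ ball (0 : ℂ) 1 := by
    rw [mem_ball_zero_iff, norm_mul, hζn, mul_one, Complex.norm_of_nonneg hr0]
    exact hr1
  have hpc : ContinuousOn (poissonKernel 0 ((r : ℂ) * ζ)) (sphere (0 : ℂ) 1) := by
    have h := continuousOn_herglotzRieszKernel_sphere (R := 1) hz
    rw [abs_one] at h
    rw [poissonKernel_eq_re_herglotzRieszKernel]
    exact Complex.continuous_re.comp_continuousOn h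
  have hsum : herg f (r * ζ) + herg (fun w => f ((starRingEnd ℂ) w)) (r * (starRingEnd ℂ) ζ) - f ζ
      = circleAverage (fun w => poissonKernel 0 (r * ζ) w • (f w - f ζ)) 0 1 := by
    have e1 := herg_add_conj (hf.continuousOn hβ) hz
    rw [map_mul, Complex.conj_ofReal] at e1
    have e2 := DiffContOnCl.circleAverage_poissonKernel_smul (R := 1) (c := 0)
      (f := fun _ => f ζ) diffContOnCl_const hz
    have e2' : circleAverage (fun w => poissonKernel 0 (r * ζ) w • f ζ) 0 1 = f ζ := e2
    simp only [smul_sub]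
    rw [circleAverage_fun_sub, e1, e2']
    · exact (hpc.smul (hf.continuousOn hβ)).circleIntegrable zero_le_one
    · exact (hpc.smul continuousOn_const).circleIntegrable zero_le_one
  simp only [Function.comp_apply]
  rw [hsum]
  refine (norm_circleAverage_le ((kernel_integrable β hr0 hr1 hζ).const_smul
    (a := 2 * (1 - r) * (2 ^ β * M))) fun w hw => ?_).trans ?_
  · have hwn : ‖w‖ = 1 := by simpa using hw
    have hrn : ‖(r : ℂ) * ζ‖ = r := by
      rw [norm_mul, hζn, mul_one, Complex.norm_of_nonneg hr0]
    have := holder_div_sq_le hβ hf hr0 hr1 hζ hw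
    rw [norm_smul, poissonKernel_def, sub_zero, sub_zero, hwn, hrn, Real.norm_of_nonneg
      (div_nonneg (by nlinarith) (by positivity))]
    simp only [Pi.smul_apply, smul_eq_mul]
    calc (1 ^ 2 - r ^ 2) / ‖w - r * ζ‖ ^ 2 * ‖f w - f ζ‖
        = (1 - r ^ 2) * (‖f w - f ζ‖ / ‖w - r * ζ‖ ^ 2) := by ring
      _ ≤ (2 * (1 - r)) * (2 ^ β * M * ‖w - r * ζ‖ ^ (β - 2)) := by
          refine mul_le_mul (by nlinarith) this (by positivity) (by linarith)
      _ = _ := by ring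
  · rw [circleAverage_smul, smul_eq_mul]
    have hp : 0 < 1 - r := by linarith
    calc 2 * (1 - r) * (2 ^ β * M) * _
        ≤ 2 * (1 - r) * (2 ^ β * M) * (K * (1 - r) ^ (β - 1)) := by
          have := hK r hr0 hr1 ζ hζ
          gcongr
      _ = 2 * (2 ^ β * M) * K * ((1 - r) ^ (β - 1) * (1 - r)) := by ring
      _ = _ := by rw [← Real.rpow_add_one hp.ne']; ring_nf

end Boundary

/-! ### The contraction principle in the Hölder norm -/

section FixedPoint

variable {E : Type*} [NormedAddCommGroup E] [CompleteSpace E]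

/-- The contraction principle for the Hölder norm on the circle, with functions identified when they
agree on the circle. -/
theorem exists_fixedPoint {β a : ℝ} {T : (ℂ → E) → ℂ → E} (h0 : Hol β a (T fun _ => 0))
    (hT : ∀ f g M N K, Hol β M f → Hol β N g → Hol β K (fun z => f z - g z) →
      Hol β (K / 2) fun z => T f z - T g z) :
    ∃ x : ℂ → E, Hol β (2 * a) x ∧ ∀ ζ ∈ sphere (0 : ℂ) 1, T x ζ = x ζ := by
  set x : ℕ → ℂ → E := fun n => T^[n] fun _ => 0 with hx
  have hxs : ∀ n, x (n + 1) = T (x n) := fun n => Function.iterate_succ_apply' T n _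
  have hz : Hol β 0 (fun _ : ℂ => (0 : E)) := ⟨by simp, by simp⟩
  have hstep : ∀ n, (∃ N, Hol β N (x n)) ∧ Hol β (a / 2 ^ n) (fun z => x (n + 1) z - x n z) := by
    intro n
    induction n with
    | zero => exact ⟨⟨0, hz⟩, by simpa [hx] using h0⟩
    | succ n ih =>
      obtain ⟨⟨N, hN⟩, hd⟩ := ih
      have h1 : Hol β (a / 2 ^ n + N) (x (n + 1)) := by simpa using hd.add hN
      refine ⟨⟨_, h1⟩, ?_⟩
      have h2 := hT _ _ _ _ _ h1 hN hd
      rw [hxs (n + 1)]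
      conv => enter [3, z]; rw [hxs n]
      rw [pow_succ, ← div_div]
      rwa [← hxs n] at h2 ⊢
  have hdist : ∀ ζ ∈ sphere (0 : ℂ) 1, ∀ n, dist (x n ζ) (x (n + 1) ζ) ≤ 2 * a / 2 / 2 ^ n := by
    intro ζ hζ n
    rw [dist_comm, dist_eq_norm, mul_div_cancel_left₀ _ two_ne_zero]
    exact (hstep n).2.1 ζ hζ
  set y : ℂ → E := fun ζ => limUnder atTop fun n => x n ζ
  have hlim : ∀ ζ ∈ sphere (0 : ℂ) 1, Tendsto (fun n => x n ζ) atTop (𝓝 (y ζ)) := fun ζ hζ =>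
    (cauchySeq_of_le_geometric_two (hdist ζ hζ)).tendsto_limUnder
  have hy : ∀ n, Hol β (2 * a / 2 ^ n) (fun z => y z - x n z) := by
    intro n
    refine ⟨fun ζ hζ => ?_, fun ζ hζ w hw => ?_⟩
    · rw [← dist_eq_norm, dist_comm]
      exact dist_le_of_le_geometric_two_of_tendsto (hdist ζ hζ) (hlim ζ hζ) n
    · have h := dist_le_of_le_geometric_two_of_tendsto (f := fun n => x n ζ - x n w)
        (C := 2 * a * ‖ζ - w‖ ^ β) (fun n => ?_) ((hlim ζ hζ).sub (hlim w hw)) n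
      · rw [dist_comm, dist_eq_norm] at h
        rw [sub_sub_sub_comm]
        exact h.trans_eq (by ring)
      · rw [dist_comm, dist_eq_norm, sub_sub_sub_comm]
        exact ((hstep n).2.2 ζ hζ w hw).trans_eq (by ring)
  have hy0 : Hol β (2 * a) y := by simpa [hx] using hy 0
  refine ⟨y, hy0, fun ζ hζ => ?_⟩
  have ht : Tendsto (fun n : ℕ => 2 * a / 2 ^ n / 2) atTop (𝓝 0) := by
    have := (tendsto_pow_atTop_nhds_zero_of_lt_one (by norm_num : (0 : ℝ) ≤ 1 / 2)
      (by norm_num)).const_mul a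
    rw [mul_zero] at this
    refine this.congr fun n => ?_
    rw [one_div, inv_pow]
    ring
  have h1 : Tendsto (fun n => x (n + 1) ζ) atTop (𝓝 (T y ζ)) := by
    rw [tendsto_iff_norm_sub_tendsto_zero]
    refine squeeze_zero (fun _ => norm_nonneg _) (fun n => ?_) ht
    obtain ⟨N, hN⟩ := (hstep n).1
    rw [hxs, norm_sub_rev]
    exact (hT _ _ _ _ _ hy0 hN (hy n)).1 ζ hζ
  exact tendsto_nhds_unique h1 ((tendsto_add_atTop_iff_nat 1).2 (hlim ζ hζ))

end FixedPoint

/-! ### Factorization of loops close to the identity -/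

section NearIdentity

/-- Factorization of a loop close to the identity: `1 + e` becomes holomorphic in the disc after
multiplication on the right by an invertible function antiholomorphic in the disc. Writing the latter
as `1 + x`, the condition is that `x` is minus the antiholomorphic part of `e + e * x`, which is a
fixed point equation for a contraction when `e` is small. -/
theorem exists_factor_near_one (A : Type*) [NormedRing A] [NormedAlgebra ℂ A] [CompleteSpace A]
    {β : ℝ} (hβ : 0 < β) (hβ1 : β < 1) :
    ∃ ε : ℝ, 0 < ε ∧ ∀ e : ℂ → A, Hol β ε e → ∃ P N : ℂ → A,
      DiffContOnCl ℂ P (ball 0 1) ∧ DiffContOnCl ℂ N (ball 0 1) ∧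
      (∀ z ∈ closedBall (0 : ℂ) 1, IsUnit (P z)) ∧ (∀ z ∈ closedBall (0 : ℂ) 1, IsUnit (N z)) ∧
      ∀ ζ ∈ sphere (0 : ℂ) 1, (1 + e ζ) * N ((starRingEnd ℂ) ζ) = P ζ := by
  obtain ⟨C, hC0, hC⟩ := exists_bd_bound A hβ hβ1
  have hεC : 4 * C * (1 / (4 * (C + 1))) ≤ 1 := by
    rw [mul_one_div, div_le_one (by positivity)]
    linarith
  refine ⟨1 / (4 * (C + 1)), by positivity, fun e he => ?_⟩
  set ε := 1 / (4 * (C + 1))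
  have hε : 0 < ε := by positivity
  set T : (ℂ → A) → ℂ → A := fun x ζ =>
    -bd (fun w => e ((starRingEnd ℂ) w) + e ((starRingEnd ℂ) w) * x ((starRingEnd ℂ) w))
      ((starRingEnd ℂ) ζ) with hTdef
  have hQ : ∀ (f : ℂ → A) (M : ℝ), Hol β M f →
      Hol β (C * M) (fun ζ => -bd (fun w => f ((starRingEnd ℂ) w)) ((starRingEnd ℂ) ζ)) := by
    intro f M hf
    obtain ⟨-, -, h1, h2⟩ := hC _ _ hf.comp_conj
    have : Hol β (C * M) (bd fun w => f ((starRingEnd ℂ) w)) :=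
      ⟨fun ζ hζ => h1 ζ (sphere_subset_closedBall hζ), fun ζ hζ w hw =>
        h2 ζ (sphere_subset_closedBall hζ) w (sphere_subset_closedBall hw)⟩
    exact this.comp_conj.neg
  have hT0 : Hol β (C * ε) (T fun _ => 0) := by simpa [hTdef] using hQ e ε he
  obtain ⟨x, hx, hfix⟩ := exists_fixedPoint hT0 fun f g M N K hf hg hK => by
    have h1 := hQ _ _ (he.mul hK)
    refine (h1.mono ?_).congr fun ζ hζ => ?_
    · have := hK.nonneg
      nlinarith
    · have e1 := bd_sub hβ hβ1 (he.add (he.mul hf)).comp_conj (he.add (he.mul hg)).comp_conj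
        (sphere_subset_closedBall (conj_mem_sphere hζ))
      simp only [hTdef]
      rw [neg_sub_neg, ← neg_sub, ← e1]
      congr 2
      funext w
      rw [add_sub_add_left_eq_sub, mul_sub]
  have hg : Hol β (2 * ε) (fun z => e z + e z * x z) := by
    refine (he.add (he.mul hx)).mono ?_
    nlinarith
  obtain ⟨-, hd1, hb1, -⟩ := hC _ _ hg
  obtain ⟨-, hd2, hb2, -⟩ := hC _ _ hg.comp_conj
  have hsmall : C * (2 * ε) < 1 := by nlinarith
  refine ⟨fun z => 1 + bd (fun z => e z + e z * x z) z,
    fun z => 1 - bd (fun w => e ((starRingEnd ℂ) w) + e ((starRingEnd ℂ) w) *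
      x ((starRingEnd ℂ) w)) z, diffContOnCl_const.add hd1, diffContOnCl_const.sub hd2,
      fun z hz => ?_, fun z hz => ?_, fun ζ hζ => ?_⟩
  · have := isUnit_one_sub_of_norm_lt_one (x := -bd (fun z => e z + e z * x z) z)
      (by rw [norm_neg]; exact (hb1 z hz).trans_lt hsmall)
    simpa using this
  · exact isUnit_one_sub_of_norm_lt_one ((hb2 z hz).trans_lt hsmall)
  · have h1 := hfix ζ hζ
    have h2 := bd_add_conj hβ hβ1 hg hζ
    simp only [hTdef] at h1
    simp only
    rw [sub_eq_add_neg, h1]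
    rw [← eq_sub_iff_add_eq, sub_eq_add_neg, h1] at h2
    rw [h2]
    noncomm_ring

end NearIdentity

/-! ### Approximation by trigonometric polynomials -/

section Approximation

theorem const_smul_integrable {𝕜 E : Type*} [NormedAddCommGroup E] [NormedField 𝕜]
    [NormedSpace 𝕜 E] (c : 𝕜) {f : ℂ → E} (hf : CircleIntegrable f 0 1) :
    CircleIntegrable (fun w => c • f w) 0 1 :=
  IntervalIntegrable.smul (f := fun θ => f (circleMap 0 1 θ)) hf c

theorem circleAverage_rotate {E : Type*} [NormedAddCommGroup E] [NormedSpace ℝ E] (h : ℂ → E)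
    {ζ : ℂ} (hζ : ζ ∈ sphere (0 : ℂ) 1) :
    circleAverage (fun w => h (ζ * w)) 0 1 = circleAverage h 0 1 := by
  have hζn : ‖ζ‖ = 1 := by simpa using hζ
  rw [circleAverage_eq_integral_add (f := h) (arg ζ), circleAverage_def]
  congr 2
  funext θ
  have : ζ = exp (arg ζ * I) := by
    have := Complex.norm_mul_exp_arg_mul_I ζ
    rw [hζn] at this
    simpa using this.symm
  rw [circleMap_zero, circleMap_zero]
  push_cast
  rw [add_mul, Complex.exp_add, ← this]
  congr 1
  ring

/-- The mass of the unnormalized kernel `‖1 + w‖ ^ (2 * n)` on the circle. -/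
noncomputable def kerMass (n : ℕ) : ℝ := circleAverage (fun w => ‖1 + w‖ ^ (2 * n)) 0 1

/-- Reduction of the mass to the Wallis integrals, from `‖1 + exp (i θ)‖ = 2 |cos (θ / 2)|`. -/
theorem kerMass_eq (n : ℕ) : kerMass n = 4 ^ n / π * ∫ x in (0 : ℝ)..π, Real.cos x ^ (2 * n) := by
  have h : ∀ θ : ℝ, ‖1 + circleMap 0 1 θ‖ ^ (2 * n) = 4 ^ n * Real.cos (θ / 2) ^ (2 * n) := by
    intro θ
    rw [pow_mul, pow_mul, ← mul_pow, Complex.sq_norm, Complex.normSq_apply, circleMap_zero,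
      Real.cos_sq (θ / 2)]
    congr 1
    simp only [ofReal_one, one_mul, add_re, one_re, add_im, one_im, Complex.exp_ofReal_mul_I_re,
      Complex.exp_ofReal_mul_I_im]
    have := Real.sin_sq_add_cos_sq θ
    rw [mul_div_cancel₀ _ two_ne_zero]
    nlinarith
  rw [kerMass, circleAverage_def]
  simp only [h]
  rw [intervalIntegral.integral_const_mul, intervalIntegral.integral_comp_div
    (fun x => Real.cos x ^ (2 * n)) two_ne_zero]
  simp only [zero_div, smul_eq_mul]
  rw [mul_div_cancel_left₀ _ two_ne_zero]
  field_simp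

theorem kerMass_succ (n : ℕ) : kerMass (n + 1) = 4 * ((2 * n + 1) / (2 * n + 2)) * kerMass n := by
  rw [kerMass_eq, kerMass_eq, mul_add, mul_one, integral_cos_pow]
  push_cast
  simp
  ring

theorem kerMass_pos (n : ℕ) : 0 < kerMass n := by
  induction n with
  | zero => simp [kerMass, circleAverage_const]
  | succ n ih => rw [kerMass_succ]; positivity

/-- The kernel concentrates at `1`: its second moment is of order `1 / n` times its mass. -/
theorem kerMass_moment (n : ℕ) :
    circleAverage (fun w => ‖1 + w‖ ^ (2 * n) * ‖w - 1‖ ^ 2) 0 1 = 4 / (2 * n + 2) * kerMass n := by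
  have hc : ∀ n : ℕ, CircleIntegrable (fun w => ‖1 + w‖ ^ (2 * n)) 0 1 := fun n =>
    ContinuousOn.circleIntegrable zero_le_one (by fun_prop)
  have h : circleAverage (fun w => ‖1 + w‖ ^ (2 * n) * ‖w - 1‖ ^ 2) 0 1 =
      circleAverage (fun w => (4 : ℝ) • ‖1 + w‖ ^ (2 * n) - ‖1 + w‖ ^ (2 * (n + 1))) 0 1 := by
    refine circleAverage_congr_sphere fun w hw => ?_
    have hwn : ‖w‖ = 1 := by simpa using hw
    have := parallelogram_law_with_norm ℝ w 1
    rw [hwn, norm_one, add_comm w 1] at this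
    simp only [smul_eq_mul]
    rw [mul_add, mul_one, pow_add]
    linear_combination ‖1 + w‖ ^ (2 * n) * this
  rw [h, circleAverage_fun_sub (const_smul_integrable 4 (hc n)) (hc _), circleAverage_fun_smul]
  change 4 * kerMass n - kerMass (n + 1) = _
  rw [kerMass_succ]
  field_simp
  ring

theorem rpow_le_add_sq {α δ t : ℝ} (hα : 0 < α) (hα2 : α < 2) (hδ : 0 < δ) (ht : 0 ≤ t) :
    t ^ α ≤ δ ^ α + δ ^ (α - 2) * t ^ 2 := by
  rcases le_total t δ with h | h
  · have := Real.rpow_le_rpow ht h hα.le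
    have : 0 ≤ δ ^ (α - 2) * t ^ 2 := by positivity
    linarith
  · have ht0 : 0 < t := hδ.trans_le h
    have h1 : t ^ (α - 2) ≤ δ ^ (α - 2) := Real.rpow_le_rpow_of_nonpos hδ h (by linarith)
    have h2 : t ^ α = t ^ (α - 2) * t ^ 2 := by
      rw [← Real.rpow_natCast, ← Real.rpow_add ht0]
      norm_num
    rw [h2]
    have : 0 ≤ δ ^ α := by positivity
    nlinarith [mul_le_mul_of_nonneg_right h1 (sq_nonneg t)]

variable {E : Type*} [NormedAddCommGroup E] [NormedSpace ℂ E]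

/-- The mean of `f` over rotations of the circle, weighted by `‖1 + w‖ ^ (2 * n)`. -/
noncomputable def smooth (n : ℕ) (f : ℂ → E) (ζ : ℂ) : E :=
  (kerMass n)⁻¹ • circleAverage (fun w => ‖1 + w‖ ^ (2 * n) • f (ζ * w)) 0 1

theorem rot_mem {ζ w : ℂ} (hζ : ζ ∈ sphere (0 : ℂ) 1) (hw : w ∈ sphere (0 : ℂ) 1) :
    ζ * w ∈ sphere (0 : ℂ) 1 := by
  simp_all

theorem smooth_integrable {f : ℂ → E} (hf : ContinuousOn f (sphere (0 : ℂ) 1)) (n : ℕ) {ζ : ℂ}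
    (hζ : ζ ∈ sphere (0 : ℂ) 1) :
    CircleIntegrable (fun w => ‖1 + w‖ ^ (2 * n) • f (ζ * w)) 0 1 := by
  refine ContinuousOn.circleIntegrable zero_le_one
    (ContinuousOn.smul (f := fun w : ℂ => ‖1 + w‖ ^ (2 * n)) (by fun_prop) ?_)
  exact hf.comp (by fun_prop) fun w hw => rot_mem hζ hw

/-- The smoothed function is a trigonometric polynomial, because on the circle
`‖ζ + w‖ ^ 2 = (ζ + w) ^ 2 / (ζ * w)`. -/
theorem smooth_eq_poly {f : ℂ → E} (hf : ContinuousOn f (sphere (0 : ℂ) 1)) (n : ℕ) :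
    ∃ a : ℕ → E, ∀ ζ ∈ sphere (0 : ℂ) 1,
      smooth n f ζ = (ζ ^ n)⁻¹ • ∑ j ∈ Finset.range (2 * n + 1), ζ ^ j • a j := by
  refine ⟨fun j => ((kerMass n : ℂ)⁻¹ * ((2 * n).choose j : ℂ)) •
    circleAverage (fun w => (w ^ (2 * n - j) * (w ^ n)⁻¹) • f w) 0 1, fun ζ hζ => ?_⟩
  have hζn : ‖ζ‖ = 1 := by simpa using hζ
  have hζ0 : ζ ≠ 0 := by rintro rfl; simp at hζn
  have h1 : circleAverage (fun w => ‖1 + w‖ ^ (2 * n) • f (ζ * w)) 0 1 =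
      circleAverage (fun w => ‖ζ + w‖ ^ (2 * n) • f w) 0 1 := by
    rw [← circleAverage_rotate (fun w => ‖ζ + w‖ ^ (2 * n) • f w) hζ]
    refine congrArg (fun g => circleAverage g 0 1) (funext fun w => ?_)
    rw [show ζ + ζ * w = ζ * (1 + w) by ring, norm_mul, hζn, one_mul]
  have h2 : circleAverage (fun w => ‖ζ + w‖ ^ (2 * n) • f w) 0 1 =
      circleAverage (fun w => ∑ j ∈ Finset.range (2 * n + 1), ((ζ ^ n)⁻¹ * ζ ^ j *
        ((2 * n).choose j : ℂ)) • ((w ^ (2 * n - j) * (w ^ n)⁻¹) • f w)) 0 1 := by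
    refine circleAverage_congr_sphere fun w hw => ?_
    have hwn : ‖w‖ = 1 := by simpa using hw
    have hw0 : w ≠ 0 := by rintro rfl; simp at hwn
    have h3 : ((‖ζ + w‖ ^ 2 : ℝ) : ℂ) = (ζ + w) ^ 2 * ζ⁻¹ * w⁻¹ := by
      rw [Complex.sq_norm, Complex.normSq_eq_conj_mul_self, map_add,
        ← Complex.inv_eq_conj hζn, ← Complex.inv_eq_conj hwn]
      field_simp
      ring
    have h4 : ((‖ζ + w‖ ^ (2 * n) : ℝ) : ℂ) = (ζ + w) ^ (2 * n) * (ζ ^ n)⁻¹ * (w ^ n)⁻¹ := by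
      rw [pow_mul, ofReal_pow, h3, mul_pow, mul_pow, ← pow_mul, inv_pow, inv_pow]
    rw [← Complex.coe_smul, h4, add_pow, Finset.sum_mul, Finset.sum_mul, Finset.sum_smul]
    refine Finset.sum_congr rfl fun j _ => ?_
    rw [smul_smul]
    congr 1
    ring
  have hint : ∀ j, CircleIntegrable (fun w : ℂ => (w ^ (2 * n - j) * (w ^ n)⁻¹) • f w) 0 1 := by
    intro j
    refine ContinuousOn.circleIntegrable zero_le_one (ContinuousOn.smul ?_ hf)
    refine ContinuousOn.mul (by fun_prop) (ContinuousOn.inv₀ (by fun_prop) fun w hw => ?_)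
    have hw0 : w ≠ 0 := by rintro rfl; simp at hw
    exact pow_ne_zero _ hw0
  rw [smooth, h1, h2, circleAverage_fun_sum fun j _ => const_smul_integrable _ (hint j),
    Finset.smul_sum, Finset.smul_sum]
  refine Finset.sum_congr rfl fun j _ => ?_
  rw [circleAverage_fun_smul, ← Complex.coe_smul, smul_smul, smul_smul, smul_smul]
  congr 1
  push_cast
  ring

variable [CompleteSpace E]

/-- A Hölder function on the circle is uniformly approximated by trigonometric polynomials with the
same Hölder constant. -/
theorem exists_trig_approx {α M : ℝ} (hα : 0 < α) (hα1 : α < 1) (hM : 0 ≤ M) {f : ℂ → E}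
    (hfc : ContinuousOn f (sphere (0 : ℂ) 1))
    (hf : ∀ ζ ∈ sphere (0 : ℂ) 1, ∀ w ∈ sphere (0 : ℂ) 1, ‖f ζ - f w‖ ≤ M * ‖ζ - w‖ ^ α)
    {ε : ℝ} (hε : 0 < ε) :
    ∃ (n : ℕ) (g : ℂ → E), (∃ a : ℕ → E, ∀ ζ ∈ sphere (0 : ℂ) 1,
        g ζ = (ζ ^ n)⁻¹ • ∑ j ∈ Finset.range (2 * n + 1), ζ ^ j • a j) ∧
      (∀ ζ ∈ sphere (0 : ℂ) 1, ‖g ζ - f ζ‖ ≤ ε) ∧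
      ∀ ζ ∈ sphere (0 : ℂ) 1, ∀ w ∈ sphere (0 : ℂ) 1, ‖g ζ - g w‖ ≤ M * ‖ζ - w‖ ^ α := by
  have ht : Tendsto (fun δ : ℝ => M * δ ^ α) (𝓝[>] 0) (𝓝 0) := by
    have : Continuous fun δ : ℝ => M * δ ^ α :=
      continuous_const.mul (Continuous.rpow_const (by fun_prop) fun _ => Or.inr hα.le)
    have h := this.tendsto 0
    simp only [mul_zero, Real.zero_rpow hα.ne'] at h
    exact h.mono_left nhdsWithin_le_nhds
  obtain ⟨δ, hδε, hδ⟩ :=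
    ((ht.eventually_lt_const (half_pos hε)).and self_mem_nhdsWithin).exists
  have hδ : 0 < δ := hδ
  obtain ⟨n, hn⟩ := exists_nat_gt (M * δ ^ (α - 2) * 4 / (ε / 2))
  have hI := kerMass_pos n
  have hkc : ∀ n : ℕ, CircleIntegrable (fun w => ‖1 + w‖ ^ (2 * n)) 0 1 := fun n =>
    ContinuousOn.circleIntegrable zero_le_one (by fun_prop)
  refine ⟨n, smooth n f, smooth_eq_poly hfc n, fun ζ hζ => ?_, fun ζ hζ w hw => ?_⟩
  · have hζn : ‖ζ‖ = 1 := by simpa using hζ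
    have e1 : smooth n f ζ - f ζ =
        (kerMass n)⁻¹ • circleAverage (fun w => ‖1 + w‖ ^ (2 * n) • (f (ζ * w) - f ζ)) 0 1 := by
      have : circleAverage (fun w : ℂ => ‖1 + w‖ ^ (2 * n) • f ζ) 0 1 = kerMass n • f ζ := by
        have := (ContinuousLinearMap.toSpanSingleton ℝ (f ζ)).circleAverage_comp_comm (hkc n)
        simpa [Function.comp_def, kerMass] using this
      simp only [smul_sub]
      rw [circleAverage_fun_sub (smooth_integrable hfc n hζ), this, smul_sub,
        inv_smul_smul₀ hI.ne', smooth]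
      exact ContinuousOn.circleIntegrable zero_le_one (by fun_prop)
    rw [e1, norm_smul, norm_inv, Real.norm_of_nonneg hI.le, inv_mul_le_iff₀ hI]
    have hci : CircleIntegrable (fun w => ‖1 + w‖ ^ (2 * n) * ‖w - 1‖ ^ 2) 0 1 :=
      ContinuousOn.circleIntegrable zero_le_one (by fun_prop)
    refine (norm_circleAverage_le (h := fun w => (M * δ ^ α) • ‖1 + w‖ ^ (2 * n) +
      (M * δ ^ (α - 2)) • (‖1 + w‖ ^ (2 * n) * ‖w - 1‖ ^ 2))
      ((const_smul_integrable _ (hkc n)).add (const_smul_integrable _ hci)) fun w hw => ?_).trans ?_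
    · rw [norm_smul, norm_pow, norm_norm]
      have h1 := hf _ (rot_mem hζ hw) _ hζ
      have h2 : ‖ζ * w - ζ‖ = ‖w - 1‖ := by
        rw [show ζ * w - ζ = ζ * (w - 1) by ring, norm_mul, hζn, one_mul]
      rw [h2] at h1
      have h3 := rpow_le_add_sq hα (by linarith) hδ (norm_nonneg (w - 1))
      calc ‖1 + w‖ ^ (2 * n) * ‖f (ζ * w) - f ζ‖
          ≤ ‖1 + w‖ ^ (2 * n) * (M * (δ ^ α + δ ^ (α - 2) * ‖w - 1‖ ^ 2)) := by
            refine mul_le_mul_of_nonneg_left (h1.trans ?_) (by positivity)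
            gcongr
        _ = _ := by simp only [smul_eq_mul]; ring
    · rw [circleAverage_fun_add (const_smul_integrable _ (hkc n)) (const_smul_integrable _ hci),
        circleAverage_fun_smul, circleAverage_fun_smul, kerMass_moment]
      simp only [smul_eq_mul]
      change M * δ ^ α * kerMass n + _ ≤ _
      rw [div_lt_iff₀ (by positivity)] at hn
      have h5 : M * δ ^ (α - 2) * (4 / (2 * n + 2)) ≤ ε / 2 := by
        rw [← mul_div_assoc, div_le_iff₀ (by positivity)]
        nlinarith
      nlinarith [mul_le_mul_of_nonneg_right h5 hI.le, mul_le_mul_of_nonneg_right hδε.le hI.le]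
  · rw [smooth, smooth, ← smul_sub, ← circleAverage_fun_sub (smooth_integrable hfc n hζ)
      (smooth_integrable hfc n hw), norm_smul, norm_inv, Real.norm_of_nonneg hI.le,
      inv_mul_le_iff₀ hI]
    refine (norm_circleAverage_le (h := fun u => (M * ‖ζ - w‖ ^ α) • ‖1 + u‖ ^ (2 * n))
      (const_smul_integrable _ (hkc n)) fun u hu => ?_).trans ?_
    · have hun : ‖u‖ = 1 := by simpa using hu
      rw [← smul_sub, norm_smul, norm_pow, norm_norm, smul_eq_mul, mul_comm]
      refine mul_le_mul_of_nonneg_right ?_ (by positivity)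
      have h1 := hf _ (rot_mem hζ hu) _ (rot_mem hw hu)
      rwa [← sub_mul, norm_mul, hun, mul_one] at h1
    · rw [circleAverage_fun_smul, smul_eq_mul, mul_comm]
      exact le_rfl

end Approximation

/-! ### Matrix functions holomorphic in the disc -/

section HolMat

variable {m : ℕ}

/-- Matrix-valued functions with all entries continuous on the closed unit disc and holomorphic on
the open one. -/
def HolMat (A : ℂ → Matrix (Fin m) (Fin m) ℂ) : Prop :=
  ∀ i j, DiffContOnCl ℂ (fun z => A z i j) (ball 0 1)

theorem diffContOnCl_mul {f g : ℂ → ℂ} (hf : DiffContOnCl ℂ f (ball 0 1))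
    (hg : DiffContOnCl ℂ g (ball 0 1)) : DiffContOnCl ℂ (fun z => f z * g z) (ball 0 1) :=
  hf.smul hg

theorem diffContOnCl_sum {ι : Type*} {s : Finset ι} {f : ι → ℂ → ℂ}
    (hf : ∀ i ∈ s, DiffContOnCl ℂ (f i) (ball 0 1)) :
    DiffContOnCl ℂ (fun z => ∑ i ∈ s, f i z) (ball 0 1) :=
  ⟨DifferentiableOn.fun_sum fun i hi => (hf i hi).1, continuousOn_finsetSum _ fun i hi => (hf i hi).2⟩

theorem diffContOnCl_prod {ι : Type*} {s : Finset ι} {f : ι → ℂ → ℂ}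
    (hf : ∀ i ∈ s, DiffContOnCl ℂ (f i) (ball 0 1)) :
    DiffContOnCl ℂ (fun z => ∏ i ∈ s, f i z) (ball 0 1) :=
  ⟨DifferentiableOn.fun_finsetProd fun i hi => (hf i hi).1,
    continuousOn_finsetProd _ fun i hi => (hf i hi).2⟩

theorem HolMat.const (A : Matrix (Fin m) (Fin m) ℂ) : HolMat fun _ => A :=
  fun _ _ => diffContOnCl_const

theorem HolMat.add {A B : ℂ → Matrix (Fin m) (Fin m) ℂ} (hA : HolMat A) (hB : HolMat B) :
    HolMat fun z => A z + B z := fun i j => (hA i j).add (hB i j)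

theorem HolMat.smul (c : ℂ) {A : ℂ → Matrix (Fin m) (Fin m) ℂ} (hA : HolMat A) :
    HolMat fun z => c • A z := fun i j => (hA i j).const_smul c

theorem HolMat.mul {A B : ℂ → Matrix (Fin m) (Fin m) ℂ} (hA : HolMat A) (hB : HolMat B) :
    HolMat fun z => A z * B z := by
  intro i j
  simp only [Matrix.mul_apply]
  exact diffContOnCl_sum fun k _ => diffContOnCl_mul (hA i k) (hB k j)

theorem HolMat.det {A : ℂ → Matrix (Fin m) (Fin m) ℂ} (hA : HolMat A) :
    DiffContOnCl ℂ (fun z => (A z).det) (ball 0 1) := by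
  simp only [Matrix.det_apply']
  exact diffContOnCl_sum fun σ _ => diffContOnCl_mul diffContOnCl_const
    (diffContOnCl_prod fun i _ => hA _ _)

theorem HolMat.updateCol {A : ℂ → Matrix (Fin m) (Fin m) ℂ} (hA : HolMat A) (j : Fin m)
    {b : ℂ → Fin m → ℂ} (hb : ∀ i, DiffContOnCl ℂ (fun z => b z i) (ball 0 1)) :
    HolMat fun z => (A z).updateCol j (b z) := by
  intro i k
  simp only [Matrix.updateCol_apply]
  split_ifs
  · exact hb i
  · exact hA i k

theorem HolMat.adjugate {A : ℂ → Matrix (Fin m) (Fin m) ℂ} (hA : HolMat A) :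
    HolMat fun z => (A z).adjugate := by
  intro i j
  simp only [Matrix.adjugate_apply]
  refine HolMat.det fun k l => ?_
  simp only [Matrix.updateRow_apply]
  split_ifs
  · exact diffContOnCl_const
  · exact hA k l

theorem HolMat.inv {A : ℂ → Matrix (Fin m) (Fin m) ℂ} (hA : HolMat A)
    (hu : ∀ z ∈ closedBall (0 : ℂ) 1, IsUnit (A z)) : HolMat fun z => (A z)⁻¹ := by
  intro i j
  have h : ∀ z, (A z)⁻¹ i j = ((A z).det)⁻¹ * (A z).adjugate i j := by
    intro z
    rw [Matrix.inv_def, Matrix.smul_apply, Ring.inverse_eq_inv', smul_eq_mul]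
  simp only [h]
  refine diffContOnCl_mul (hA.det.inv fun z hz => ?_) (hA.adjugate i j)
  rw [closure_ball _ one_ne_zero] at hz
  exact ((Matrix.isUnit_iff_isUnit_det _).1 (hu z hz)).ne_zero

theorem diffContOnCl_dslope {f : ℂ → ℂ} (hf : DiffContOnCl ℂ f (ball 0 1)) {a : ℂ}
    (ha : a ∈ ball (0 : ℂ) 1) : DiffContOnCl ℂ (dslope f a) (ball 0 1) := by
  have hn : ball (0 : ℂ) 1 ∈ 𝓝 a := isOpen_ball.mem_nhds ha
  refine ⟨(Complex.differentiableOn_dslope hn).2 hf.1, ?_⟩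
  exact (continuousOn_dslope (mem_of_superset hn subset_closure)).2
    ⟨hf.2, hf.1.differentiableAt hn⟩

end HolMat

/-! ### Birkhoff factorization of Hölder loops -/

section Birkhoff

variable {m : ℕ}

/-- A zero of the determinant of `H` in the disc is removed by a change of one column, at the price of raising one exponent. If `H a` kills `c`, the column of `H` whose exponent is the least
among those with `c i ≠ 0` is replaced by `(H z *ᵥ c) / (z - a)`; minimality makes the
compensating column operation a polynomial in `conj ζ`. -/
theorem exists_column_step (κ : Fin m → ℤ) {H : ℂ → Matrix (Fin m) (Fin m) ℂ} (hH : HolMat H)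
    {a : ℂ} (ha : a ∈ ball (0 : ℂ) 1) (hdet : (H a).det = 0) :
    ∃ (H' B : ℂ → Matrix (Fin m) (Fin m) ℂ) (κ' : Fin m → ℤ), HolMat H' ∧ HolMat B ∧
      (∀ z ∈ closedBall (0 : ℂ) 1, IsUnit (B z)) ∧ (∀ z, (z - a) * (H' z).det = (H z).det) ∧
      ∀ ζ ∈ sphere (0 : ℂ) 1, H ζ * Matrix.diagonal (fun i => ζ ^ κ i) =
        H' ζ * Matrix.diagonal (fun i => ζ ^ κ' i) * B ((starRingEnd ℂ) ζ) := by
  obtain ⟨c₀, hc₀, hHc₀⟩ := Matrix.exists_mulVec_eq_zero_iff.2 hdet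
  obtain ⟨j, hj, hmin⟩ := Finset.exists_min_image (Finset.univ.filter fun i => c₀ i ≠ 0) κ
    (by obtain ⟨i, hi⟩ := Function.ne_iff.1 hc₀; exact ⟨i, by simpa using hi⟩)
  have hj : c₀ j ≠ 0 := by simpa using hj
  set c : Fin m → ℂ := (c₀ j)⁻¹ • c₀ with hc
  have hcj : c j = 1 := by simp [hc, hj]
  have hHc : H a *ᵥ c = 0 := by rw [hc, Matrix.mulVec_smul, hHc₀, smul_zero]
  have hcmin : ∀ i, c i ≠ 0 → κ j ≤ κ i := by
    intro i hi
    refine hmin i ?_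
    simp only [Finset.mem_filter, Finset.mem_univ, true_and]
    intro h
    exact hi (by simp [hc, h])
  set w : ℂ → Fin m → ℂ := fun z i => dslope (fun z => (H z *ᵥ c) i) a z with hw
  have hv : ∀ i, DiffContOnCl ℂ (fun z => (H z *ᵥ c) i) (ball 0 1) := by
    intro i
    simp only [Matrix.mulVec, dotProduct]
    exact diffContOnCl_sum fun k _ => diffContOnCl_mul (hH i k) diffContOnCl_const
  have hwz : ∀ z, (z - a) • w z = H z *ᵥ c := by
    intro z
    funext i
    have := sub_smul_dslope (fun z => (H z *ᵥ c) i) a z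
    simp only [hHc, Pi.zero_apply, sub_zero] at this
    simpa [hw] using this
  set b : ℂ → Fin m → ℂ := fun v i =>
    if i = j then 1 - a * v else -c i * v ^ (κ i - κ j).toNat with hb
  refine ⟨fun z => (H z).updateCol j (w z), fun v => (1 : Matrix (Fin m) (Fin m) ℂ).updateCol j (b v),
    Function.update κ j (κ j + 1), hH.updateCol j fun i => diffContOnCl_dslope (hv i) ha,
    (HolMat.const 1).updateCol j fun i => ?_, fun z hz => ?_, fun z => ?_, fun ζ hζ => ?_⟩
  · refine Differentiable.diffContOnCl ?_
    simp only [hb]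
    split_ifs <;> fun_prop
  · rw [Matrix.isUnit_iff_isUnit_det, ← Matrix.cramer_apply, Matrix.cramer_one, isUnit_iff_ne_zero]
    simp only [hb, Module.End.one_apply, if_true]
    intro h
    have h1 : ‖a * z‖ = 1 := by rw [← sub_eq_zero.1 h, norm_one]
    rw [norm_mul] at h1
    have h2 : ‖a‖ < 1 := by simpa using ha
    have h3 : ‖z‖ ≤ 1 := by simpa using hz
    nlinarith [norm_nonneg a, norm_nonneg z]
  · rw [← Matrix.det_updateCol_smul, hwz, ← Matrix.cramer_apply, Matrix.cramer_eq_adjugate_mulVec,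
      Matrix.mulVec_mulVec, Matrix.adjugate_mul, Matrix.smul_mulVec, Matrix.one_mulVec]
    simp [hcj]
  · have hζn : ‖ζ‖ = 1 := by simpa using hζ
    have hζ0 : ζ ≠ 0 := by rintro rfl; simp at hζn
    rw [← Complex.inv_eq_conj hζn]
    ext i k
    rw [Matrix.mul_diagonal, Matrix.mul_apply]
    simp only [Matrix.mul_diagonal]
    by_cases hk : k = j
    · subst hk
      have hsum := congrFun (hwz ζ) i
      simp only [Pi.smul_apply, smul_eq_mul, Matrix.mulVec, dotProduct] at hsum
      rw [Finset.sum_eq_add_sum_sdiff_singleton_of_mem (Finset.mem_univ k)] at hsum ⊢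
      have : ∀ l ∈ Finset.univ \ {k}, (H ζ).updateCol k (w ζ) i l *
          ζ ^ Function.update κ k (κ k + 1) l *
          (1 : Matrix (Fin m) (Fin m) ℂ).updateCol k (b ζ⁻¹) l k =
          -ζ ^ κ k * (H ζ i l * c l) := by
        intro l hl
        have hl : l ≠ k := by simpa using hl
        simp only [Matrix.updateCol_ne hl, Function.update_of_ne hl, Matrix.updateCol_self, hb,
          if_neg hl]
        by_cases hcl : c l = 0
        · simp [hcl]
        · have e1 : ζ ^ κ l * ζ⁻¹ ^ (κ l - κ k).toNat = ζ ^ κ k := by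
            rw [← zpow_natCast, Int.toNat_of_nonneg (sub_nonneg.2 (hcmin l hcl)), inv_zpow',
              ← zpow_add₀ hζ0]
            congr 1
            ring
          linear_combination (-(H ζ i l) * c l) * e1
      rw [Finset.sum_congr rfl this, ← Finset.mul_sum]
      simp only [Matrix.updateCol_self, Function.update_self, hb, if_true, hcj] at hsum ⊢
      rw [zpow_add_one₀ hζ0]
      have e2 : ζ * ζ⁻¹ = 1 := mul_inv_cancel₀ hζ0
      linear_combination (-ζ ^ κ k) * hsum + a * w ζ i * ζ ^ κ k * e2
    · rw [Finset.sum_eq_single k]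
      · simp [Matrix.updateCol_ne hk, Function.update_of_ne hk]
      · intro l _ hl
        simp [Matrix.updateCol_ne hk, hl]
      · simp

/-- Repeated column steps remove all zeros of the determinant. There are finitely many, as the
determinant is a polynomial `p` times a nonvanishing function `u`; each step lowers the degree of `p`. -/
theorem exists_reduce (n : ℕ) (κ : Fin m → ℤ) {H : ℂ → Matrix (Fin m) (Fin m) ℂ} (hH : HolMat H)
    {p : Polynomial ℂ} (hn : p.natDegree ≤ n) {u : ℂ → ℂ} (hu : ContinuousOn u (closedBall 0 1))
    (hu0 : ∀ z ∈ closedBall (0 : ℂ) 1, u z ≠ 0)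
    (hdet : ∀ z ∈ closedBall (0 : ℂ) 1, (H z).det = p.eval z * u z)
    (hs : ∀ ζ ∈ sphere (0 : ℂ) 1, (H ζ).det ≠ 0) :
    ∃ (A B : ℂ → Matrix (Fin m) (Fin m) ℂ) (κ' : Fin m → ℤ), HolMat A ∧ HolMat B ∧
      (∀ z ∈ closedBall (0 : ℂ) 1, IsUnit (A z)) ∧ (∀ z ∈ closedBall (0 : ℂ) 1, IsUnit (B z)) ∧
      ∀ ζ ∈ sphere (0 : ℂ) 1, H ζ * Matrix.diagonal (fun i => ζ ^ κ i) =
        A ζ * Matrix.diagonal (fun i => ζ ^ κ' i) * B ((starRingEnd ℂ) ζ) := by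
  by_cases hz : ∀ z ∈ closedBall (0 : ℂ) 1, (H z).det ≠ 0
  · refine ⟨H, fun _ => 1, κ, hH, HolMat.const 1, fun z hz' => ?_, fun _ _ => isUnit_one,
      fun ζ _ => (mul_one _).symm⟩
    rw [Matrix.isUnit_iff_isUnit_det, isUnit_iff_ne_zero]
    exact hz z hz'
  · push Not at hz
    obtain ⟨a, ha, ha0⟩ := hz
    have hab : a ∈ ball (0 : ℂ) 1 := by
      rw [← closedBall_sdiff_sphere]
      exact ⟨ha, fun h => hs a h ha0⟩
    have hroot : p.IsRoot a := by
      have := hdet a ha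
      rw [ha0] at this
      exact (mul_eq_zero.1 this.symm).resolve_right (hu0 a ha)
    have hp0 : p ≠ 0 := by
      rintro rfl
      exact hs 1 (by simp) (by rw [hdet 1 (by simp)]; simp)
    obtain ⟨q, hq⟩ := Polynomial.dvd_iff_isRoot.2 hroot
    have hq0 : q ≠ 0 := by rintro rfl; simp [hp0] at hq
    have hdeg : p.natDegree = 1 + q.natDegree := by
      rw [hq, Polynomial.natDegree_mul (Polynomial.X_sub_C_ne_zero a) hq0,
        Polynomial.natDegree_X_sub_C]
    obtain ⟨H', B, κ', hH', hB, hBu, hdet', hfac⟩ := exists_column_step κ hH hab ha0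
    have hne : ∀ z ∈ closedBall (0 : ℂ) 1, z ≠ a → (H' z).det = q.eval z * u z := by
      intro z hz hza
      refine mul_left_cancel₀ (sub_ne_zero.2 hza) ?_
      rw [hdet', hdet z hz, hq]
      simp
      ring
    have hH'det : ∀ z ∈ closedBall (0 : ℂ) 1, (H' z).det = q.eval z * u z := by
      intro z hz
      rcases eq_or_ne z a with rfl | hza
      · have hnhd : closedBall (0 : ℂ) 1 ∈ 𝓝 z :=
          mem_of_superset (isOpen_ball.mem_nhds hab) ball_subset_closedBall
        have c1 : ContinuousAt (fun z => (H' z).det) z := by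
          have := hH'.det.continuousOn
          rw [closure_ball _ one_ne_zero] at this
          exact this.continuousAt hnhd
        have c2 : ContinuousAt (fun z => q.eval z * u z) z :=
          q.continuous.continuousAt.mul (hu.continuousAt hnhd)
        refine tendsto_nhds_unique (c1.mono_left nhdsWithin_le_nhds : Tendsto _ (𝓝[≠] z) _)
          ((c2.mono_left nhdsWithin_le_nhds).congr' ?_)
        filter_upwards [self_mem_nhdsWithin, mem_nhdsWithin_of_mem_nhds hnhd] with y hy hy'
        exact (hne y hy' hy).symm
      · exact hne z hz hza
    match n with
    | 0 => omega
    | n + 1 =>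
      obtain ⟨A₁, B₁, κ₁, hA₁, hB₁, hA₁u, hB₁u, hfac₁⟩ := exists_reduce n κ' hH'
        (by omega : q.natDegree ≤ n) hu hu0 hH'det (fun ζ hζ h => hs ζ hζ (by
          rw [← hdet' ζ, h, mul_zero]))
      refine ⟨A₁, fun z => B₁ z * B z, κ₁, hA₁, hB₁.mul hB, hA₁u,
        fun z hz => (hB₁u z hz).mul (hBu z hz), fun ζ hζ => ?_⟩
      rw [hfac ζ hζ, hfac₁ ζ hζ, mul_assoc]

attribute [local instance] Matrix.linftyOpNormedRing Matrix.linftyOpNormedAlgebra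

theorem HolMat.of_diffContOnCl {A : ℂ → Matrix (Fin m) (Fin m) ℂ}
    (hA : DiffContOnCl ℂ A (ball 0 1)) : HolMat A := by
  intro i j
  let L : Matrix (Fin m) (Fin m) ℂ →L[ℂ] ℂ :=
    (Matrix.entryLinearMap ℂ ℂ i j).toContinuousLinearMap
  exact L.differentiable.comp_diffContOnCl hA

/-- Halving the exponent turns uniform smallness into smallness of the Hölder norm. -/
theorem Hol.of_small {E : Type*} [NormedAddCommGroup E] {α M η s : ℝ} (hs : 0 ≤ s)
    (hηs : η ≤ s) (hηM : 4 * η * M ≤ s ^ 2) {f : ℂ → E}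
    (h1 : ∀ ζ ∈ sphere (0 : ℂ) 1, ‖f ζ‖ ≤ η)
    (h2 : ∀ ζ ∈ sphere (0 : ℂ) 1, ∀ w ∈ sphere (0 : ℂ) 1, ‖f ζ - f w‖ ≤ 2 * M * ‖ζ - w‖ ^ α) :
    Hol (α / 2) s f := by
  refine ⟨fun ζ hζ => (h1 ζ hζ).trans hηs, fun ζ hζ w hw => ?_⟩
  have h3 : ‖f ζ - f w‖ ≤ 2 * η := by
    have := norm_sub_le (f ζ) (f w)
    linarith [h1 ζ hζ, h1 w hw]
  have h4 := h2 ζ hζ w hw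
  have h5 : (‖ζ - w‖ ^ (α / 2)) ^ 2 = ‖ζ - w‖ ^ α := by
    rw [← Real.rpow_natCast, ← Real.rpow_mul (norm_nonneg _)]
    norm_num
  refine le_of_sq_le_sq ?_ (by positivity)
  rw [mul_pow, h5]
  have h0 := norm_nonneg (f ζ - f w)
  calc ‖f ζ - f w‖ ^ 2 ≤ (2 * η) * (2 * M * ‖ζ - w‖ ^ α) := by
        rw [sq]
        exact mul_le_mul h3 h4 h0 (h0.trans h3)
    _ = 4 * η * M * ‖ζ - w‖ ^ α := by ring
    _ ≤ _ := by gcongr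

/-- Birkhoff factorization of a Hölder loop of invertible matrices with Hölder inverse. A
trigonometric polynomial `g` close to `G` has `G⁻¹ * g` close to `1` in a weaker Hölder norm, so that
`g * N = G * P(conj ζ)` with `N` and `P` invertible and holomorphic in the disc. On the left-hand side
`ζ ^ n * g` is a polynomial, to which the reduction of the determinant applies. -/
theorem exists_birkhoff {α M : ℝ} (hα : 0 < α) (hα1 : α < 1)
    {G G' : ℂ → Matrix (Fin m) (Fin m) ℂ} (hG : Hol α M G) (hG' : Hol α M G')
    (hinv : ∀ ζ ∈ sphere (0 : ℂ) 1, G ζ * G' ζ = 1) :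
    ∃ (A B : ℂ → Matrix (Fin m) (Fin m) ℂ) (κ : Fin m → ℤ), HolMat A ∧ HolMat B ∧
      (∀ z ∈ closedBall (0 : ℂ) 1, IsUnit (A z)) ∧ (∀ z ∈ closedBall (0 : ℂ) 1, IsUnit (B z)) ∧
      ∀ ζ ∈ sphere (0 : ℂ) 1,
        G ζ = A ζ * Matrix.diagonal (fun i => ζ ^ κ i) * B ((starRingEnd ℂ) ζ) := by
  have : CompleteSpace (Matrix (Fin m) (Fin m) ℂ) := FiniteDimensional.complete ℂ _
  have hβ : 0 < α / 2 := by linarith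
  have hβ1 : α / 2 < 1 := by linarith
  obtain ⟨ε, hε, hfac⟩ := exists_factor_near_one (Matrix (Fin m) (Fin m) ℂ) hβ hβ1
  have hM := hG.nonneg
  set K := M + 1 with hKdef
  have hK : 0 < K := by linarith
  set s := ε / (4 * K) with hs
  have hs0 : 0 < s := by positivity
  set η := min s (s ^ 2 / (4 * K)) with hη
  have hη0 : 0 < η := by positivity
  have hGK := hG.mono (by linarith : M ≤ K)
  obtain ⟨n, g, ⟨a, ha⟩, hg1, hg2⟩ := exists_trig_approx hα hα1 hK.le (hG.continuousOn hα) hGK.2 hη0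
  have hD : Hol (α / 2) s (fun ζ => g ζ - G ζ) := by
    refine Hol.of_small (M := K) hs0.le (min_le_left _ _) ?_ hg1 fun ζ hζ w hw => ?_
    · have := min_le_right s (s ^ 2 / (4 * K))
      rw [le_div_iff₀ (by positivity)] at this
      linarith
    · rw [sub_sub_sub_comm]
      have := norm_sub_le (g ζ - g w) (G ζ - G w)
      linarith [hg2 ζ hζ w hw, hGK.2 ζ hζ w hw]
  have hG'β : Hol (α / 2) (2 * K) G' := by
    have hK' := hG'.mono (by linarith : M ≤ K)
    refine ⟨fun ζ hζ => (hK'.1 ζ hζ).trans (by linarith), fun ζ hζ w hw =>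
      (hK'.2 ζ hζ w hw).trans ?_⟩
    have h1 : ‖ζ - w‖ ^ α = ‖ζ - w‖ ^ (α / 2) * ‖ζ - w‖ ^ (α / 2) := by
      rw [← Real.rpow_add_of_nonneg (norm_nonneg _) hβ.le hβ.le]
      ring_nf
    have h2 : ‖ζ - w‖ ≤ 2 := by
      have := norm_sub_le ζ w
      have e1 : ‖ζ‖ = 1 := by simpa using hζ
      have e2 : ‖w‖ = 1 := by simpa using hw
      linarith
    have h3 : ‖ζ - w‖ ^ (α / 2) ≤ 2 := by
      calc ‖ζ - w‖ ^ (α / 2) ≤ 2 ^ (α / 2) := by gcongr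
        _ ≤ 2 ^ (1 : ℝ) := Real.rpow_le_rpow_of_exponent_le one_le_two hβ1.le
        _ = 2 := Real.rpow_one 2
    rw [h1]
    have h4 : 0 ≤ ‖ζ - w‖ ^ (α / 2) := by positivity
    nlinarith [mul_le_mul_of_nonneg_right h3 (mul_nonneg hK.le h4)]
  have he : Hol (α / 2) ε (fun ζ => G' ζ * (g ζ - G ζ)) := by
    refine (hG'β.mul hD).mono (le_of_eq ?_)
    rw [hs]
    field_simp
    norm_num
  obtain ⟨P, N, hP, hN, hPu, hNu, hPN⟩ := hfac _ he.comp_conj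
  have hP := HolMat.of_diffContOnCl hP
  have hN := HolMat.of_diffContOnCl hN
  -- the trigonometric polynomial times `N` is `G` times a function antiholomorphic in the disc
  have key : ∀ ζ ∈ sphere (0 : ℂ) 1, g ζ * N ζ = G ζ * P ((starRingEnd ℂ) ζ) := by
    intro ζ hζ
    have h := hPN _ (conj_mem_sphere hζ)
    rw [Complex.conj_conj] at h
    have h' := mul_eq_one_comm.1 (hinv ζ hζ)
    rw [← h, mul_sub, h', add_sub_cancel, ← mul_assoc, ← mul_assoc, hinv ζ hζ, one_mul]
  set Q : ℂ → Matrix (Fin m) (Fin m) ℂ := fun z => ∑ j ∈ Finset.range (2 * n + 1), z ^ j • a j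
    with hQ
  set Qp : Matrix (Fin m) (Fin m) (Polynomial ℂ) := Matrix.of fun i k =>
    ∑ j ∈ Finset.range (2 * n + 1), Polynomial.X ^ j * Polynomial.C (a j i k) with hQp
  have hQeval : ∀ z, (Polynomial.evalRingHom z).mapMatrix Qp = Q z := by
    intro z
    ext i k
    simp [hQp, hQ, Matrix.sum_apply, Polynomial.eval_finsetSum]
    exact Finset.sum_congr rfl fun _ _ => mul_comm _ _
  have hQdet : ∀ z, Qp.det.eval z = (Q z).det := by
    intro z
    rw [← hQeval, ← RingHom.map_det, Polynomial.coe_evalRingHom]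
  have hQhol : HolMat Q := by
    intro i k
    simp only [hQ, Matrix.sum_apply, Matrix.smul_apply, smul_eq_mul]
    refine Differentiable.diffContOnCl ?_
    fun_prop
  have hdetu : ∀ {B : Matrix (Fin m) (Fin m) ℂ}, IsUnit B → B.det ≠ 0 := fun hB =>
    ((Matrix.isUnit_iff_isUnit_det _).1 hB).ne_zero
  have hQN : ∀ ζ ∈ sphere (0 : ℂ) 1, (Q ζ * N ζ) * Matrix.diagonal (fun _ => ζ ^ (-(n : ℤ))) =
      G ζ * P ((starRingEnd ℂ) ζ) := by
    intro ζ hζ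
    rw [← key ζ hζ, ha ζ hζ, zpow_neg, zpow_natCast, ← Matrix.smul_one_eq_diagonal,
      Matrix.mul_smul, mul_one, Matrix.smul_mul]
  have hNc := hN.det.continuousOn
  rw [closure_ball _ one_ne_zero] at hNc
  obtain ⟨A, B, κ, hA, hB, hAu, hBu, hAB⟩ := exists_reduce _ (fun _ => -(n : ℤ)) (hQhol.mul hN)
    (le_refl Qp.det.natDegree) hNc (fun z hz => hdetu (hNu z hz))
    (fun z _ => by rw [Matrix.det_mul, hQdet]) (fun ζ hζ h => by
      have h1 := congrArg Matrix.det (hQN ζ hζ)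
      rw [Matrix.det_mul, h, zero_mul, Matrix.det_mul] at h1
      have h2 : (G ζ).det ≠ 0 := hdetu (IsUnit.of_mul_eq_one _ (hinv ζ hζ))
      have h3 := hdetu (hPu _ (sphere_subset_closedBall (conj_mem_sphere hζ)))
      exact mul_ne_zero h2 h3 h1.symm)
  have hPi := hP.inv hPu
  have hinvu : ∀ z ∈ closedBall (0 : ℂ) 1, IsUnit (P z)⁻¹ := fun z hz =>
    (Matrix.isUnit_nonsing_inv_iff).2 (hPu z hz)
  refine ⟨A, fun z => B z * (P z)⁻¹, κ, hA, hB.mul hPi, hAu, fun z hz =>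
    (hBu z hz).mul (hinvu z hz), fun ζ hζ => ?_⟩
  have h1 := hAB ζ hζ
  rw [hQN ζ hζ] at h1
  rw [← mul_assoc, ← h1, Matrix.mul_nonsing_inv_cancel_right]
  exact (Matrix.isUnit_iff_isUnit_det _).1
    (hPu _ (sphere_subset_closedBall (conj_mem_sphere hζ)))

end Birkhoff

/-! ### Constancy of holomorphic functions with real or conjugate-holomorphic boundary values -/

section Constancy

/-- The maximum principle for `exp (± i f)` makes `f` real in the disc, and a nonconstant holomorphic
function is open. -/
theorem eq_const_of_real_on_sphere {f : ℂ → ℂ} (hf : DiffContOnCl ℂ f (ball 0 1))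
    (hr : ∀ ζ ∈ sphere (0 : ℂ) 1, (f ζ).im = 0) :
    ∃ w, ∀ z ∈ closedBall (0 : ℂ) 1, f z = w := by
  have hexp : ∀ c : ℂ, DiffContOnCl ℂ (fun z => exp (c * f z)) (ball 0 1) := fun c =>
    Complex.differentiable_exp.comp_diffContOnCl (hf.const_smul c)
  have hle : ∀ c : ℂ, c.re = 0 → ∀ z ∈ closedBall (0 : ℂ) 1, (c * f z).re ≤ 0 := by
    intro c hc z hz
    have := Complex.norm_le_of_forall_mem_frontier_norm_le (C := 1) isBounded_ball (hexp c)
      (fun ζ hζ => ?_) (by rwa [closure_ball _ one_ne_zero])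
    · rwa [Complex.norm_exp, Real.exp_le_one_iff] at this
    · rw [frontier_ball _ one_ne_zero] at hζ
      rw [Complex.norm_exp, Complex.mul_re, hc, hr ζ hζ]
      simp
  have him : ∀ z ∈ closedBall (0 : ℂ) 1, (f z).im = 0 := by
    intro z hz
    have h1 := hle I (by simp) z hz
    have h2 := hle (-I) (by simp) z hz
    simp at h1 h2
    linarith
  have hconst : ∃ w, ∀ z ∈ ball (0 : ℂ) 1, f z = w := by
    refine ((hf.1.analyticOnNhd isOpen_ball).is_constant_or_isOpen
      (convex_ball _ _).isPreconnected).resolve_right fun h => ?_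
    have ho := h (ball 0 1) subset_rfl isOpen_ball
    have hmem : f 0 ∈ f '' ball 0 1 := ⟨0, by simp, rfl⟩
    obtain ⟨ε, hε, hsub⟩ := Metric.isOpen_iff.1 ho _ hmem
    have h2 : f 0 + (ε / 2 : ℝ) * I ∈ ball (f 0) ε := by
      rw [mem_ball, dist_self_add_left, norm_mul, Complex.norm_I, mul_one,
        Complex.norm_of_nonneg (by positivity)]
      linarith
    obtain ⟨z, hz, hze⟩ := hsub h2
    have h3 := him z (ball_subset_closedBall hz)
    have h4 := him 0 (by simp)
    rw [hze] at h3
    simp [h4] at h3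
    linarith
  obtain ⟨w, hw⟩ := hconst
  refine ⟨w, fun z hz => ?_⟩
  rw [← closure_ball _ one_ne_zero] at hz
  exact Set.EqOn.of_subset_closure (fun z hz => hw z hz) hf.2 continuousOn_const subset_closure
    subset_rfl hz

/-- A function holomorphic in the disc whose conjugate agrees on the circle with a function
holomorphic in the disc is constant. -/
theorem eq_const_of_conj_on_sphere {f g : ℂ → ℂ} (hf : DiffContOnCl ℂ f (ball 0 1))
    (hg : DiffContOnCl ℂ g (ball 0 1))
    (h : ∀ ζ ∈ sphere (0 : ℂ) 1, (starRingEnd ℂ) (f ζ) = g ζ) :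
    ∃ w, ∀ z ∈ closedBall (0 : ℂ) 1, f z = w := by
  obtain ⟨w₁, h₁⟩ := eq_const_of_real_on_sphere (hf.add hg) fun ζ hζ => by
    simp [← h ζ hζ]
  obtain ⟨w₂, h₂⟩ := eq_const_of_real_on_sphere ((hf.sub hg).const_smul I) fun ζ hζ => by
    simp [← h ζ hζ]
  refine ⟨(w₁ - I * w₂) / 2, fun z hz => ?_⟩
  rw [← h₁ z hz, ← h₂ z hz]
  simp only [Pi.add_apply, Pi.smul_apply, Pi.sub_apply, smul_eq_mul]
  linear_combination ((f z - g z) / 2) * I_mul_I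

end Constancy

/-! ### Factorizations compatible with conjugation -/

section Symmetric

variable {m : ℕ}

/-- Entrywise complex conjugation of matrices. -/
noncomputable abbrev bar : Matrix (Fin m) (Fin m) ℂ →+* Matrix (Fin m) (Fin m) ℂ :=
  (starRingEnd ℂ).mapMatrix

theorem bar_bar (A : Matrix (Fin m) (Fin m) ℂ) : bar (bar A) = A := by
  ext i j
  simp

theorem bar_smul (c : ℂ) (A : Matrix (Fin m) (Fin m) ℂ) :
    bar (c • A) = (starRingEnd ℂ) c • bar A := by
  ext i j
  simp

theorem bar_inv (A : Matrix (Fin m) (Fin m) ℂ) (hA : IsUnit A) : bar A⁻¹ = (bar A)⁻¹ := by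
  refine (Matrix.inv_eq_right_inv ?_).symm
  rw [← map_mul, Matrix.mul_nonsing_inv _ ((Matrix.isUnit_iff_isUnit_det _).1 hA), map_one]

theorem HolMat.bar_conj {B : ℂ → Matrix (Fin m) (Fin m) ℂ} (hB : HolMat B) :
    HolMat fun z => bar (B ((starRingEnd ℂ) z)) := by
  intro i j
  refine ⟨fun z hz => ?_, ?_⟩
  · have hz' : (starRingEnd ℂ) z ∈ ball (0 : ℂ) 1 := by simpa using hz
    have := ((hB i j).1.differentiableAt (isOpen_ball.mem_nhds hz')).conj_conj
    rw [Complex.conj_conj] at this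
    exact this.differentiableWithinAt
  · have := (hB i j).2
    rw [closure_ball _ one_ne_zero] at this ⊢
    exact Complex.continuous_conj.comp_continuousOn
      (this.comp Complex.continuous_conj.continuousOn fun z hz => by simpa using hz)

/-- The determinant vanishes only when `-u ^ 2` is an eigenvalue of `T`. -/
theorem exists_unimodular (T : Matrix (Fin m) (Fin m) ℂ) :
    ∃ u : ℂ, ‖u‖ = 1 ∧ (u • (1 : Matrix (Fin m) (Fin m) ℂ) + u⁻¹ • T).det ≠ 0 := by
  have hinf : (sphere (0 : ℂ) 1).Infinite :=
    (isPreconnected_sphere (by simp) _ _).infinite_of_nontrivial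
      ⟨1, by simp, -1, by simp, by norm_num⟩
  obtain ⟨v, hv, hvT⟩ := hinf.exists_notMem_finset T.charpoly.roots.toFinset
  have hvn : ‖v‖ = 1 := by simpa using hv
  have hvT : T.charpoly.eval v ≠ 0 := by
    simpa [Polynomial.mem_roots T.charpoly_monic.ne_zero] using hvT
  obtain ⟨u, hu⟩ := IsAlgClosed.exists_pow_nat_eq (-v) two_pos
  have hun : ‖u‖ = 1 := by
    have : ‖u‖ ^ 2 = 1 := by rw [← norm_pow, hu, norm_neg, hvn]
    exact (pow_eq_one_iff_of_nonneg (norm_nonneg u) two_ne_zero).1 this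
  have hu0 : u ≠ 0 := by rintro rfl; simp at hun
  refine ⟨u, hun, ?_⟩
  have : u • (1 : Matrix (Fin m) (Fin m) ℂ) + u⁻¹ • T = (-u⁻¹) • (Matrix.scalar (Fin m) v - T) := by
    have : v = -(u ^ 2) := by rw [hu, neg_neg]
    ext i j
    by_cases hij : i = j
    · subst hij
      simp [this, Matrix.scalar_apply]
      field_simp
      ring
    · simp [Matrix.scalar_apply, hij]
  rw [this, Matrix.det_smul, ← Matrix.eval_charpoly]
  exact mul_ne_zero (pow_ne_zero _ (neg_ne_zero.2 (inv_ne_zero hu0))) hvT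

/-- A Birkhoff factorization of a loop with `G * bar G = 1` can be made compatible with the
conjugation. Put `K z = bar (B (conj z))` and let `Λ` be the diagonal factor. On the circle
`G * bar A = K⁻¹ * Λ` and `G * bar K⁻¹ = A * Λ`, so `Θ = u • A + u⁻¹ • K⁻¹` satisfies
`G * bar Θ = Θ * Λ` for every unimodular `u`. The quotient of `Θ.det` by `A.det` is holomorphic and its
conjugate agrees on the circle with a holomorphic function; it is therefore constant, and a generic `u`
makes it nonzero. -/
theorem exists_symmetric_factor {G A B : ℂ → Matrix (Fin m) (Fin m) ℂ} {κ : Fin m → ℤ}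
    (hA : HolMat A) (hB : HolMat B) (hAu : ∀ z ∈ closedBall (0 : ℂ) 1, IsUnit (A z))
    (hBu : ∀ z ∈ closedBall (0 : ℂ) 1, IsUnit (B z))
    (hfac : ∀ ζ ∈ sphere (0 : ℂ) 1,
        G ζ = A ζ * Matrix.diagonal (fun i => ζ ^ κ i) * B ((starRingEnd ℂ) ζ))
    (hG : ∀ ζ ∈ sphere (0 : ℂ) 1, G ζ * bar (G ζ) = 1) :
    ∃ Θ : ℂ → Matrix (Fin m) (Fin m) ℂ, HolMat Θ ∧
      (∀ z ∈ closedBall (0 : ℂ) 1, IsUnit (Θ z)) ∧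
      ∀ ζ ∈ sphere (0 : ℂ) 1, G ζ * bar (Θ ζ) = Θ ζ * Matrix.diagonal (fun i => ζ ^ κ i) := by
  set K : ℂ → Matrix (Fin m) (Fin m) ℂ := fun z => bar (B ((starRingEnd ℂ) z)) with hKdef
  have hK : HolMat K := hB.bar_conj
  have hKu : ∀ z ∈ closedBall (0 : ℂ) 1, IsUnit (K z) := fun z hz =>
    (hBu _ (by simpa using hz)).map bar
  have hd : ∀ {C : Matrix (Fin m) (Fin m) ℂ}, IsUnit C → IsUnit C.det := fun h =>
    (Matrix.isUnit_iff_isUnit_det _).1 h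
  have hS : HolMat fun z => K z * A z := hK.mul hA
  have hSu : ∀ z ∈ closedBall (0 : ℂ) 1, IsUnit (K z * A z) := fun z hz =>
    (hKu z hz).mul (hAu z hz)
  have hbarB : ∀ ζ, B ((starRingEnd ℂ) ζ) = bar (K ζ) := fun ζ => (bar_bar _).symm
  -- on the circle the conjugate of the diagonal part is its inverse
  have hΛ : ∀ ζ ∈ sphere (0 : ℂ) 1, Matrix.diagonal (fun i => ζ ^ κ i) *
      bar (Matrix.diagonal (fun i => ζ ^ κ i)) = 1 := by
    intro ζ hζ
    have hζn : ‖ζ‖ = 1 := by simpa using hζ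
    have hζ0 : ζ ≠ 0 := by rintro rfl; simp at hζn
    rw [RingHom.mapMatrix_apply, Matrix.diagonal_map (map_zero _), Matrix.diagonal_mul_diagonal,
      ← Matrix.diagonal_one]
    congr 1
    funext i
    simp only [map_zpow₀, ← Complex.inv_eq_conj hζn, inv_zpow]
    exact mul_inv_cancel₀ (zpow_ne_zero _ hζ0)
  -- the basic relation between `A` and `K` on the circle
  have hrel : ∀ ζ ∈ sphere (0 : ℂ) 1,
      A ζ * Matrix.diagonal (fun i => ζ ^ κ i) * bar (K ζ) * bar (A ζ) =
        (K ζ)⁻¹ * Matrix.diagonal (fun i => ζ ^ κ i) := by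
    intro ζ hζ
    have h1 := hG ζ hζ
    have hΛζ := hΛ ζ hζ
    set Λ := Matrix.diagonal (fun i => ζ ^ κ i)
    rw [hfac ζ hζ, map_mul, map_mul] at h1
    have hKd := hd (hKu ζ (sphere_subset_closedBall hζ))
    have h2 : A ζ * Λ * bar (K ζ) * bar (A ζ) * bar Λ = (K ζ)⁻¹ := by
      refine (Matrix.inv_eq_left_inv ?_).symm
      rw [← h1]
      simp only [mul_assoc, ← hbarB]
      rfl
    rw [← h2, mul_assoc _ (bar Λ), mul_eq_one_comm.1 hΛζ, mul_one]
  obtain ⟨u, hun, hdet⟩ := exists_unimodular ((K 1 * A 1)⁻¹)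
  have huc : (starRingEnd ℂ) u = u⁻¹ := (Complex.inv_eq_conj hun).symm
  have hu0 : u ≠ 0 := by rintro rfl; simp at hun
  have hKi := hK.inv hKu
  have hSi := hS.inv hSu
  have hq : HolMat fun z => u • (1 : Matrix (Fin m) (Fin m) ℂ) + u⁻¹ • (K z * A z)⁻¹ :=
    ((HolMat.const 1).smul u).add (hSi.smul u⁻¹)
  have hp : HolMat fun z => u⁻¹ • (1 : Matrix (Fin m) (Fin m) ℂ) + u • (K z * A z) :=
    ((HolMat.const 1).smul u⁻¹).add (hS.smul u)
  obtain ⟨w, hw⟩ := eq_const_of_conj_on_sphere hq.det hp.det fun ζ hζ => by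
    have hζ' := sphere_subset_closedBall hζ
    have hSd := hd (hSu ζ hζ')
    have hΛζ := hΛ ζ hζ
    have hr := hrel ζ hζ
    set Λ := Matrix.diagonal (fun i => ζ ^ κ i)
    -- conjugation turns the inverse of `K * A` into a matrix similar to `K * A`
    have hsim : bar ((K ζ * A ζ)⁻¹) = bar Λ * (K ζ * A ζ) * Λ := by
      rw [bar_inv _ (hSu ζ hζ')]
      refine Matrix.inv_eq_left_inv ?_
      have h1 : K ζ * (A ζ * Λ * bar (K ζ) * bar (A ζ)) = Λ := by
        rw [hr, Matrix.mul_nonsing_inv_cancel_left _ _ (hd (hKu ζ hζ'))]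
      calc bar Λ * (K ζ * A ζ) * Λ * bar (K ζ * A ζ)
          = bar Λ * (K ζ * (A ζ * Λ * bar (K ζ) * bar (A ζ))) := by
            rw [map_mul]; noncomm_ring
        _ = 1 := by rw [h1, mul_eq_one_comm.1 hΛζ]
    rw [RingHom.map_det]
    change (bar _).det = _
    rw [map_add, bar_smul, bar_smul, map_one, huc, map_inv₀, huc, inv_inv, hsim]
    have h2 : u⁻¹ • (1 : Matrix (Fin m) (Fin m) ℂ) + u • (bar Λ * (K ζ * A ζ) * Λ) =
        bar Λ * (u⁻¹ • 1 + u • (K ζ * A ζ)) * Λ := by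
      rw [mul_add, add_mul, Matrix.mul_smul, Matrix.smul_mul, mul_one, mul_eq_one_comm.1 hΛζ,
        Matrix.mul_smul, Matrix.smul_mul]
    have h3 := congrArg Matrix.det hΛζ
    rw [Matrix.det_mul, Matrix.det_one] at h3
    rw [h2, Matrix.det_mul, Matrix.det_mul]
    linear_combination (u⁻¹ • (1 : Matrix (Fin m) (Fin m) ℂ) + u • (K ζ * A ζ)).det * h3
  refine ⟨fun z => u • A z + u⁻¹ • (K z)⁻¹, (hA.smul u).add (hKi.smul u⁻¹), fun z hz => ?_,
    fun ζ hζ => ?_⟩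
  · have h1 : u • A z + u⁻¹ • (K z)⁻¹ = A z * (u • 1 + u⁻¹ • (K z * A z)⁻¹) := by
      rw [mul_add, Matrix.mul_smul, mul_one, Matrix.mul_smul, Matrix.mul_inv_rev,
        Matrix.mul_nonsing_inv_cancel_left _ _ (hd (hAu z hz))]
    change IsUnit (u • A z + u⁻¹ • (K z)⁻¹)
    rw [h1]
    refine (hAu z hz).mul ((Matrix.isUnit_iff_isUnit_det _).2 (isUnit_iff_ne_zero.2 ?_))
    rw [hw z hz, ← hw 1 (by simp)]
    exact hdet
  · have hζ' := sphere_subset_closedBall hζ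
    have hr := hrel ζ hζ
    rw [map_add, bar_smul, bar_smul, map_inv₀, huc, inv_inv, bar_inv _ (hKu ζ hζ'), mul_add,
      Matrix.mul_smul, Matrix.mul_smul, hfac ζ hζ, hbarB, hr,
      Matrix.mul_nonsing_inv_cancel_right _ _ (hd ((hKu ζ hζ').map bar)), add_mul,
      Matrix.smul_mul, Matrix.smul_mul, add_comm]

/-- The real span of the columns of an invertible matrix `A` with `G * bar A = A` is the fixed space
of the conjugation `v ↦ G *ᵥ conj v`, so it depends only on `G`. -/
theorem range_eq_fixed {G A : Matrix (Fin m) (Fin m) ℂ} (hA : IsUnit A) (hGA : G * bar A = A) :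
    Set.range (fun x : Fin m → ℝ => A.mulVec (fun i => (x i : ℂ))) =
      {v | G *ᵥ (fun i => (starRingEnd ℂ) (v i)) = v} := by
  have hconj : ∀ y : Fin m → ℂ, (fun i => (starRingEnd ℂ) ((A *ᵥ y) i)) =
      bar A *ᵥ fun i => (starRingEnd ℂ) (y i) := by
    intro y
    funext i
    simp [Matrix.mulVec, dotProduct]
  ext v
  constructor
  · rintro ⟨x, rfl⟩
    simp only [Set.mem_ofPred_eq]
    rw [hconj, Matrix.mulVec_mulVec, hGA]
    simp
  · intro hv
    rw [Set.mem_ofPred_eq] at hv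
    have hAd := (Matrix.isUnit_iff_isUnit_det _).1 hA
    set y := A⁻¹ *ᵥ v with hy
    have hAy : A *ᵥ y = v := by
      rw [hy, Matrix.mulVec_mulVec, Matrix.mul_nonsing_inv _ hAd, Matrix.one_mulVec]
    rw [← hAy, hconj, Matrix.mulVec_mulVec, hGA] at hv
    have hyr := Matrix.mulVec_injective_of_isUnit hA hv
    refine ⟨fun i => (y i).re, ?_⟩
    change A *ᵥ (fun i => ((y i).re : ℂ)) = v
    rw [← hAy]
    congr 1
    funext i
    exact Complex.conj_eq_iff_re.1 (congrFun hyr i)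

end Symmetric

/-! ### Passing from entries to matrices -/

section HolderEntries

variable {m : ℕ}

attribute [local instance] Matrix.linftyOpNormedRing Matrix.linftyOpNormedAlgebra

theorem linfty_norm_le_sum (A : Matrix (Fin m) (Fin m) ℂ) : ‖A‖ ≤ ∑ i, ∑ j, ‖A i j‖ := by
  rw [Matrix.linfty_opNorm_def]
  have : (Finset.univ.sup fun i => ∑ j, ‖A i j‖₊) ≤ ∑ i, ∑ j, ‖A i j‖₊ :=
    Finset.sup_le fun i hi => Finset.single_le_sum (f := fun i => ∑ j, ‖A i j‖₊)
      (fun _ _ => zero_le) hi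
  have := NNReal.coe_le_coe.2 this
  simpa [NNReal.coe_sum] using this

theorem Hol.of_entries {α M : ℝ} {f : ℂ → Matrix (Fin m) (Fin m) ℂ}
    (h : ∀ i j, Hol α M fun z => f z i j) : Hol α (∑ _i : Fin m, ∑ _j : Fin m, M) f := by
  refine ⟨fun ζ hζ => (linfty_norm_le_sum _).trans ?_, fun ζ hζ w hw =>
    (linfty_norm_le_sum _).trans ?_⟩
  · exact Finset.sum_le_sum fun i _ => Finset.sum_le_sum fun j _ => (h i j).1 ζ hζ
  · rw [Finset.sum_mul]
    refine Finset.sum_le_sum fun i _ => ?_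
    rw [Finset.sum_mul]
    exact Finset.sum_le_sum fun j _ => (h i j).2 ζ hζ w hw

/-- Birkhoff factorization of `τ * τᵀ` for a unitary loop `τ` with Hölder entries. -/
theorem exists_birkhoff_unitary {α M : ℝ} (hα : 0 < α) (hα1 : α < 1)
    {τ : ℂ → Matrix (Fin m) (Fin m) ℂ} (hτ : ∀ i j, Hol α M fun z => τ z i j)
    (hu : ∀ ζ ∈ sphere (0 : ℂ) 1, (τ ζ * (τ ζ)ᵀ) * bar (τ ζ * (τ ζ)ᵀ) = 1) :
    ∃ (A B : ℂ → Matrix (Fin m) (Fin m) ℂ) (κ : Fin m → ℤ), HolMat A ∧ HolMat B ∧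
      (∀ z ∈ closedBall (0 : ℂ) 1, IsUnit (A z)) ∧ (∀ z ∈ closedBall (0 : ℂ) 1, IsUnit (B z)) ∧
      ∀ ζ ∈ sphere (0 : ℂ) 1,
        τ ζ * (τ ζ)ᵀ = A ζ * Matrix.diagonal (fun i => ζ ^ κ i) * B ((starRingEnd ℂ) ζ) := by
  have hconj : ∀ i j, Hol α M fun z => (starRingEnd ℂ) (τ z i j) := fun i j =>
    ⟨fun ζ hζ => by rw [Complex.norm_conj]; exact (hτ i j).1 ζ hζ, fun ζ hζ w hw => by
      rw [← map_sub, Complex.norm_conj]; exact (hτ i j).2 ζ hζ w hw⟩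
  have h1 := (Hol.of_entries hτ).mul (Hol.of_entries (f := fun z => (τ z)ᵀ) fun i j => hτ j i)
  have h2 := (Hol.of_entries (f := fun z => bar (τ z)) fun i j => hconj i j).mul
    (Hol.of_entries (f := fun z => bar (τ z)ᵀ) fun i j => hconj j i)
  refine exists_birkhoff hα hα1 h1 h2 fun ζ hζ => ?_
  rw [← map_mul]
  exact hu ζ hζ

end HolderEntries

/-! ### The factor of a unitary loop -/

section Assembly

variable {m : ℕ}

/-- Together with `range_eq_fixed`, this identifies the real span of the columns of a unitary `T` with
the fixed space of the conjugation attached to `T * Tᵀ`. -/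
theorem mul_transpose_mul_bar {T : Matrix (Fin m) (Fin m) ℂ}
    (hT : T ∈ Matrix.unitaryGroup (Fin m) ℂ) : T * Tᵀ * bar T = T := by
  have h1 : Tᴴ * T = 1 := Matrix.mem_unitaryGroup_iff'.1 hT
  have h2 : Tᵀ * bar T = 1 := by
    have := congrArg Matrix.transpose h1
    rwa [Matrix.transpose_mul, Matrix.transpose_one] at this
  rw [mul_assoc, h2, mul_one]

theorem mul_transpose_mul_bar_self {T : Matrix (Fin m) (Fin m) ℂ}
    (hT : T ∈ Matrix.unitaryGroup (Fin m) ℂ) : (T * Tᵀ) * bar (T * Tᵀ) = 1 := by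
  have h1 : T * Tᴴ = 1 := Matrix.mem_unitaryGroup_iff.1 hT
  rw [map_mul, ← mul_assoc, mul_transpose_mul_bar hT]
  exact h1

/-- The factor `Θ` and the exponents, with the exponents in nonincreasing order. -/
theorem exists_sorted_factor {α M : ℝ} (hα : 0 < α) (hα1 : α < 1)
    {τ : ℂ → Matrix (Fin m) (Fin m) ℂ} (hτ : ∀ i j, Hol α M fun z => τ z i j)
    (hu : ∀ ζ ∈ sphere (0 : ℂ) 1, τ ζ ∈ Matrix.unitaryGroup (Fin m) ℂ) :
    ∃ (Θ : ℂ → Matrix (Fin m) (Fin m) ℂ) (κ : Fin m → ℤ), Antitone κ ∧ HolMat Θ ∧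
      (∀ z ∈ closedBall (0 : ℂ) 1, IsUnit (Θ z)) ∧
      ∀ ζ ∈ sphere (0 : ℂ) 1,
        τ ζ * (τ ζ)ᵀ * bar (Θ ζ) = Θ ζ * Matrix.diagonal (fun i => ζ ^ κ i) := by
  have hG : ∀ ζ ∈ sphere (0 : ℂ) 1, (τ ζ * (τ ζ)ᵀ) * bar (τ ζ * (τ ζ)ᵀ) = 1 := fun ζ hζ =>
    mul_transpose_mul_bar_self (hu ζ hζ)
  obtain ⟨A, B, κ, hA, hB, hAu, hBu, hfac⟩ := exists_birkhoff_unitary hα hα1 hτ hG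
  obtain ⟨Θ, hΘ, hΘu, hrel⟩ := exists_symmetric_factor hA hB hAu hBu hfac hG
  set σ := Tuple.sort (fun i => -κ i)
  refine ⟨fun z => (Θ z).submatrix id σ, κ ∘ σ, ?_, fun i j => hΘ i (σ j), fun z hz => ?_,
    fun ζ hζ => ?_⟩
  · intro i j hij
    exact neg_le_neg_iff.1 (Tuple.monotone_sort (fun i => -κ i) hij)
  · exact (Matrix.isUnit_submatrix_equiv (e₁ := Equiv.refl _) (e₂ := σ)).2 (hΘu z hz)
  · ext i j
    have := congrFun (congrFun (hrel ζ hζ) i) (σ j)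
    rw [Matrix.mul_diagonal] at this ⊢
    exact this

/-- Square roots of unimodular diagonal entries turn the intertwining relation into invariance under
the conjugation. -/
theorem mul_bar_mul_diagonal {G A : Matrix (Fin m) (Fin m) ℂ} {l d : Fin m → ℂ}
    (h : G * bar A = A * Matrix.diagonal l) (hd : ∀ i, d i ^ 2 = l i) (hl : ∀ i, ‖l i‖ = 1) :
    G * bar (A * Matrix.diagonal d) = A * Matrix.diagonal d := by
  rw [map_mul, ← mul_assoc, h, mul_assoc, RingHom.mapMatrix_apply,
    Matrix.diagonal_map (map_zero _), Matrix.diagonal_mul_diagonal]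
  congr 2
  funext i
  have h1 : ‖d i‖ = 1 := by
    have : ‖d i‖ ^ 2 = 1 := by rw [← norm_pow, hd, hl]
    exact (pow_eq_one_iff_of_nonneg (norm_nonneg _) two_ne_zero).1 this
  have h2 : d i * (starRingEnd ℂ) (d i) = 1 := by
    rw [Complex.mul_conj, Complex.normSq_eq_norm_sq, h1]
    simp
  change l i * (starRingEnd ℂ) (d i) = d i
  rw [← hd, sq, mul_assoc, h2, mul_one]

end Assembly

end OhSplitting

attribute [local instance] Matrix.normedAddCommGroup

/-- **Oh's splitting theorem** for loops of Lagrangian frames: a Hölder-continuous loop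
`τ` of unitary matrices on the unit circle admits a factorization
`τ(ζ)·ℝ^m = Θ(ζ)·Λ^{1/2}(ζ)·ℝ^m` (as real subspaces of `ℂ^m`), where `Θ` is continuous
on the closed disc, holomorphic and invertible, and `Λ^{1/2}(ζ)` is a diagonal matrix
whose `i`-th diagonal entry squares to `ζ^κᵢ`, for a nonincreasing sequence of integers
`κ₁ ≥ … ≥ κ_m` (the partial Maslov indices). -/
theorem oh_splitting (α : ℝ) (hα0 : 0 < α) (hα1 : α < 1) (m : ℕ) (hm : 0 < m)
    (τ : ℂ → Matrix (Fin m) (Fin m) ℂ)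
    (hτunitary : ∀ ζ ∈ Metric.sphere (0 : ℂ) 1, τ ζ ∈ Matrix.unitaryGroup (Fin m) ℂ)
    (hτHolder : ∃ C : ℝ, 0 ≤ C ∧ ∀ ζ₁ ∈ Metric.sphere (0 : ℂ) 1,
      ∀ ζ₂ ∈ Metric.sphere (0 : ℂ) 1, ‖τ ζ₁ - τ ζ₂‖ ≤ C * ‖ζ₁ - ζ₂‖ ^ α) :
    ∃ (Θ : ℂ → Matrix (Fin m) (Fin m) ℂ) (κ : Fin m → ℤ),
      Antitone κ ∧
      ContinuousOn Θ (Metric.closedBall (0 : ℂ) 1) ∧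
      (∀ i j, DifferentiableOn ℂ (fun z => Θ z i j) (Metric.ball (0 : ℂ) 1)) ∧
      (∀ z ∈ Metric.closedBall (0 : ℂ) 1, IsUnit (Θ z)) ∧
      ∀ ζ ∈ Metric.sphere (0 : ℂ) 1, ∃ d : Fin m → ℂ,
        (∀ i, d i ^ 2 = ζ ^ κ i) ∧
        Set.range (fun x : Fin m → ℝ => (τ ζ).mulVec (fun i => (x i : ℂ))) =
          Set.range (fun x : Fin m → ℝ =>
            (Θ ζ * Matrix.diagonal d).mulVec (fun i => (x i : ℂ))) := by
  obtain ⟨C, hC, hτ⟩ := hτHolder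
  have hent : ∀ i j, OhSplitting.Hol α (max 1 C) fun z => τ z i j := by
    intro i j
    refine ⟨fun ζ hζ => (entry_norm_bound_of_unitary (hτunitary ζ hζ) i j).trans (le_max_left _ _),
      fun ζ hζ w hw => ?_⟩
    calc ‖τ ζ i j - τ w i j‖ = ‖(τ ζ - τ w) i j‖ := rfl
      _ ≤ ‖τ ζ - τ w‖ := Matrix.norm_entry_le_entrywise_sup_norm _
      _ ≤ C * ‖ζ - w‖ ^ α := hτ ζ hζ w hw
      _ ≤ max 1 C * ‖ζ - w‖ ^ α := by
        gcongr
        exact le_max_right _ _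
  obtain ⟨Θ, κ, hκ, hΘ, hΘu, hrel⟩ := OhSplitting.exists_sorted_factor hα0 hα1 hent hτunitary
  refine ⟨Θ, κ, hκ, ?_, fun i j => (hΘ i j).1, hΘu, fun ζ hζ => ?_⟩
  · refine continuousOn_pi.2 fun i => continuousOn_pi.2 fun j => ?_
    have := (hΘ i j).2
    rwa [closure_ball _ one_ne_zero] at this
  · have hζn : ‖ζ‖ = 1 := by simpa using hζ
    have hroot : ∀ i, ∃ d : ℂ, d ^ 2 = ζ ^ κ i := fun i => IsAlgClosed.exists_pow_nat_eq _ two_pos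
    choose d hd using hroot
    have hl : ∀ i, ‖ζ ^ κ i‖ = 1 := fun i => by rw [norm_zpow, hζn, one_zpow]
    have hd0 : ∀ i, d i ≠ 0 := by
      intro i h0
      have := hl i
      rw [← hd i, h0] at this
      simp at this
    have hunit : IsUnit (τ ζ) :=
      IsUnit.of_mul_eq_one _ (Matrix.mem_unitaryGroup_iff.1 (hτunitary ζ hζ))
    have hdiag : IsUnit (Matrix.diagonal d) :=
      Matrix.isUnit_diagonal.2 (Pi.isUnit_iff.2 fun i => isUnit_iff_ne_zero.2 (hd0 i))
    refine ⟨d, hd, ?_⟩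
    rw [OhSplitting.range_eq_fixed hunit
        (OhSplitting.mul_transpose_mul_bar (hτunitary ζ hζ)),
      OhSplitting.range_eq_fixed ((hΘu ζ (Metric.sphere_subset_closedBall hζ)).mul hdiag)
        (OhSplitting.mul_bar_mul_diagonal (hrel ζ hζ) hd hl)]
end

section
/- Let k ≥ 0 be an integer and let f : 𝔻̄ → ℂ be continuous on the closed unit disc and holomorphic on the open unit disc. Then f satisfies the index-k boundary condition (i.e., for every ζ ∈ ∂𝔻 there is r ∈ ℝ with f(ζ) = r·ζ^k) if and only if there exist complex numbers a₀, a₁, …, a_{2k} with a_{2k−j} equal to the complex conjugate of a_j for every 0 ≤ j ≤ 2k, such that f(z) = Σ_{j=0}^{2k} a_j·z^j for all z ∈ 𝔻̄. -/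
/-!
If the coefficients are conjugate-symmetric, then on the circle `conj (f ζ) * ζ ^ (2k) = f ζ`,
so `f ζ * conj ζ ^ k` is self-conjugate, hence real.

Conversely, induct on `k`. For `k = 0` a function real on the circle is real on the whole disc
(maximum principle for `exp (± i f)`), hence constant (maximum principle for
`1 / (1 + i (f - f 0))`, whose norm is at most `1` with equality at the centre). For the step
from `k` to `k + 1`, the function `c + conj c * z ^ (2k+2)` with `c = f 0` has index `k + 1`;
subtracting it from `f` leaves a function of index `k + 1` vanishing at `0`, and dividing that by
`z` gives a function of index `k`, to which the induction hypothesis applies.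
-/

open Metric ComplexConjugate

/-- The maximum principle bounds `exp (w * f)` by `1` when `w * f` has nonpositive real part
on the circle. -/
lemma re_mul_nonpos_of_sphere (f : ℂ → ℂ) (hf : DiffContOnCl ℂ f (ball (0 : ℂ) 1)) (w : ℂ)
    (h : ∀ ζ ∈ sphere (0 : ℂ) 1, (w * f ζ).re ≤ 0) :
    ∀ z ∈ closedBall (0 : ℂ) 1, (w * f z).re ≤ 0 := by
  intro z hz
  have hd : DiffContOnCl ℂ (fun z => Complex.exp (w * f z)) (ball (0 : ℂ) 1) :=
    Complex.differentiable_exp.comp_diffContOnCl (hf.const_smul w)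
  have := Complex.norm_le_of_forall_mem_frontier_norm_le isBounded_ball hd (C := 1)
    (fun ζ hζ => by
      rw [frontier_ball _ one_ne_zero] at hζ
      rw [Complex.norm_exp, Real.exp_le_one_iff]
      exact h ζ hζ)
    (z := z) (by rwa [closure_ball _ one_ne_zero])
  rwa [Complex.norm_exp, Real.exp_le_one_iff] at this

lemma im_eq_zero_of_sphere (f : ℂ → ℂ) (hf : DiffContOnCl ℂ f (ball (0 : ℂ) 1))
    (h : ∀ ζ ∈ sphere (0 : ℂ) 1, (f ζ).im = 0) :
    ∀ z ∈ closedBall (0 : ℂ) 1, (f z).im = 0 := by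
  intro z hz
  have h1 := re_mul_nonpos_of_sphere f hf Complex.I (fun ζ hζ => by simp [h ζ hζ]) z hz
  have h2 := re_mul_nonpos_of_sphere f hf (-Complex.I) (fun ζ hζ => by simp [h ζ hζ]) z hz
  simp at h1 h2
  linarith

lemma eq_center_of_real_on_sphere (f : ℂ → ℂ) (hf : DiffContOnCl ℂ f (ball (0 : ℂ) 1))
    (h : ∀ ζ ∈ sphere (0 : ℂ) 1, (f ζ).im = 0) :
    ∀ z ∈ closedBall (0 : ℂ) 1, f z = f 0 := by
  have him := im_eq_zero_of_sphere f hf h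
  have h0 := him 0 (by simp)
  set g : ℂ → ℂ := fun z => 1 + Complex.I * (f z - f 0) with hg
  have hre : ∀ z ∈ closedBall (0 : ℂ) 1, (g z).re = 1 := fun z hz => by
    simp [hg, him z hz, h0]
  have hnorm : ∀ z ∈ closedBall (0 : ℂ) 1, 1 ≤ ‖g z‖ := fun z hz => by
    have := Complex.re_le_norm (g z)
    rwa [hre z hz] at this
  have hgd : DiffContOnCl ℂ g (ball (0 : ℂ) 1) :=
    ((hf.sub_const (f 0)).const_smul Complex.I).const_add 1
  have hgi : DiffContOnCl ℂ g⁻¹ (ball (0 : ℂ) 1) := hgd.inv (fun z hz hz0 => by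
    rw [closure_ball _ one_ne_zero] at hz
    have := hnorm z hz
    rw [hz0] at this
    norm_num at this)
  have hmax : IsMaxOn (norm ∘ g⁻¹) (ball (0 : ℂ) 1) 0 := fun z hz => by
    have h1 := hnorm z (ball_subset_closedBall hz)
    have h2 : g 0 = 1 := by simp [hg]
    simp only [Function.comp, Pi.inv_apply, h2, norm_inv, Set.mem_ofPred_eq, norm_one, inv_one]
    exact inv_le_one_of_one_le₀ h1
  have heq := Complex.eqOn_closedBall_of_isMaxOn_norm hgi hmax
  intro z hz
  have := heq hz
  simp only [Pi.inv_apply, Function.const_apply, inv_inj, hg] at this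
  simpa [sub_eq_zero] using this

/-- `conj ζ` is the inverse of `ζ` on the unit circle. -/
lemma mul_conj_of_sphere {ζ : ℂ} (hζ : ζ ∈ sphere (0 : ℂ) 1) : ζ * conj ζ = 1 := by
  rw [Complex.mul_conj']
  simp_all

/-- A point `w` lies on the real line spanned by `ζ ^ k` once it is fixed by the reflection
`w ↦ conj w * ζ ^ (2k)` in that line. -/
lemma exists_real_of_conj {ζ w : ℂ} (hζ : ζ ∈ sphere (0 : ℂ) 1) (k : ℕ)
    (h : conj w * ζ ^ (2 * k) = w) : ∃ r : ℝ, w = (r : ℂ) * ζ ^ k := by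
  have h1 : ζ ^ k * conj ζ ^ k = 1 := by rw [← mul_pow, mul_conj_of_sphere hζ, one_pow]
  have hc : conj (w * conj ζ ^ k) = w * conj ζ ^ k := by
    conv_rhs => rw [← h]
    simp only [map_mul, map_pow, Complex.conj_conj]
    linear_combination (-(conj w * ζ ^ k)) * h1
  obtain ⟨r, hr⟩ := Complex.conj_eq_iff_real.1 hc
  exact ⟨r, by rw [← hr]; linear_combination (-w) * h1⟩

lemma conj_of_exists_real {ζ w : ℂ} (hζ : ζ ∈ sphere (0 : ℂ) 1) (k : ℕ)
    (h : ∃ r : ℝ, w = (r : ℂ) * ζ ^ k) : conj w * ζ ^ (2 * k) = w := by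
  obtain ⟨r, rfl⟩ := h
  have h1 : ζ ^ k * conj ζ ^ k = 1 := by rw [← mul_pow, mul_conj_of_sphere hζ, one_pow]
  simp only [map_mul, map_pow, Complex.conj_ofReal]
  linear_combination (r * ζ ^ k) * h1

lemma conj_sum_mul_pow {ζ : ℂ} (hζ : ζ ∈ sphere (0 : ℂ) 1) (k : ℕ) (a : ℕ → ℂ)
    (ha : ∀ j ≤ 2 * k, a (2 * k - j) = conj (a j)) :
    conj (∑ j ∈ Finset.range (2 * k + 1), a j * ζ ^ j) * ζ ^ (2 * k) =
      ∑ j ∈ Finset.range (2 * k + 1), a j * ζ ^ j := by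
  conv_rhs => rw [← Finset.sum_range_reflect]
  rw [map_sum, Finset.sum_mul]
  refine Finset.sum_congr rfl fun j hj => ?_
  have hj : j ≤ 2 * k := Nat.lt_succ_iff.1 (Finset.mem_range.1 hj)
  have e : 2 * k + 1 - 1 - j = 2 * k - j := by omega
  rw [e, ha j hj]
  have h1 : ζ ^ j * conj ζ ^ j = 1 := by rw [← mul_pow, mul_conj_of_sphere hζ, one_pow]
  have h2 : ζ ^ (2 * k) = ζ ^ j * ζ ^ (2 * k - j) := by rw [← pow_add]; congr 1; omega
  rw [h2, map_mul, map_pow]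
  linear_combination (conj (a j) * ζ ^ (2 * k - j)) * h1

lemma exists_coeff_of_boundary (k : ℕ) : ∀ f : ℂ → ℂ, DiffContOnCl ℂ f (ball (0 : ℂ) 1) →
    (∀ ζ ∈ sphere (0 : ℂ) 1, ∃ r : ℝ, f ζ = (r : ℂ) * ζ ^ k) →
    ∃ a : ℕ → ℂ, (∀ j ≤ 2 * k, a (2 * k - j) = conj (a j)) ∧
      ∀ z ∈ closedBall (0 : ℂ) 1, f z = ∑ j ∈ Finset.range (2 * k + 1), a j * z ^ j := by
  induction k with
  | zero =>
    intro f hf h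
    have him : ∀ ζ ∈ sphere (0 : ℂ) 1, (f ζ).im = 0 := fun ζ hζ => by
      obtain ⟨r, hr⟩ := h ζ hζ
      simp [hr]
    refine ⟨fun _ => f 0, fun j _ => ?_, fun z hz => ?_⟩
    · exact (Complex.conj_eq_iff_im.2 (im_eq_zero_of_sphere f hf him 0 (by simp))).symm
    · simpa using eq_center_of_real_on_sphere f hf him z hz
  | succ k ih =>
    intro f hf h
    set c := f 0 with hc
    set g : ℂ → ℂ := fun z => f z - (c + conj c * z ^ (2 * (k + 1))) with hg
    have hgd : DiffContOnCl ℂ g (ball (0 : ℂ) 1) :=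
      hf.sub (Differentiable.diffContOnCl (by fun_prop))
    have hg0 : g 0 = 0 := by simp [hg, hc]
    have hmul : ∀ z, z * dslope g 0 z = g z := fun z => by
      simpa [hg0] using sub_smul_dslope g 0 z
    have hd : DiffContOnCl ℂ (dslope g 0) (ball (0 : ℂ) 1) := by
      have hn : ball (0 : ℂ) 1 ∈ nhds (0 : ℂ) := ball_mem_nhds _ one_pos
      refine ⟨(Complex.differentiableOn_dslope hn).2 hgd.1, ?_⟩
      exact (continuousOn_dslope (Filter.mem_of_superset hn subset_closure)).2
        ⟨hgd.2, hgd.1.differentiableAt hn⟩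
    obtain ⟨b, hb, hbs⟩ := ih (dslope g 0) hd (fun ζ hζ => by
      have hne : ζ ≠ 0 := ne_of_mem_sphere hζ one_ne_zero
      have hp : ζ ^ (2 * (k + 1)) * conj ζ ^ (2 * (k + 1)) = 1 := by
        rw [← mul_pow, mul_conj_of_sphere hζ, one_pow]
      obtain ⟨r, hr⟩ := exists_real_of_conj (w := g ζ) hζ (k + 1) (by
        have := conj_of_exists_real hζ (k + 1) (h ζ hζ)
        simp only [hg, map_sub, map_add, map_mul, map_pow, Complex.conj_conj]
        linear_combination this - c * hp)
      refine ⟨r, mul_left_cancel₀ hne ?_⟩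
      rw [hmul, hr]
      ring)
    refine ⟨fun j => if j = 0 then c else if j = 2 * k + 2 then conj c else b (j - 1),
      fun j hj => ?_, fun z hz => ?_⟩
    · rcases Nat.eq_zero_or_pos j with rfl | hj0
      · simp [mul_add]
      rcases eq_or_ne j (2 * k + 2) with rfl | hj1
      · simp [mul_add]
      have e1 : 2 * (k + 1) - j ≠ 0 := by omega
      have e2 : 2 * (k + 1) - j ≠ 2 * k + 2 := by omega
      have e3 : 2 * (k + 1) - j - 1 = 2 * k - (j - 1) := by omega
      simp only [e1, e2, hj0.ne', hj1, if_false, e3]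
      exact hb _ (by omega)
    · have hs : ∑ j ∈ Finset.range (2 * k + 1),
          (if j + 1 = 0 then c else if j + 1 = 2 * k + 2 then conj c else b (j + 1 - 1)) *
            z ^ (j + 1) = z * ∑ j ∈ Finset.range (2 * k + 1), b j * z ^ j := by
        rw [Finset.mul_sum]
        refine Finset.sum_congr rfl fun j hj => ?_
        have := Finset.mem_range.1 hj
        rw [if_neg (by omega), if_neg (by omega), Nat.add_sub_cancel]
        ring
      have e : 2 * (k + 1) + 1 = (2 * k + 1 + 1) + 1 := by ring
      rw [e, Finset.sum_range_succ', Finset.sum_range_succ, hs, ← hbs z hz, hmul]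
      simp [hg]
      ring

/-- A function `f`, continuous on the closed unit disc and holomorphic on the open unit
disc, satisfies the index-`k` boundary condition (`f(ζ) ∈ ζ^k · ℝ` for all `ζ` on the
unit circle) if and only if `f` is a polynomial `Σ_{j=0}^{2k} aⱼ zʲ` whose coefficients
satisfy the reality condition `a_{2k-j} = conj(aⱼ)`. -/
theorem index_k_boundary_condition_iff_polynomial (k : ℕ) (f : ℂ → ℂ)
    (hfc : ContinuousOn f (Metric.closedBall (0 : ℂ) 1))
    (hfd : DifferentiableOn ℂ f (Metric.ball (0 : ℂ) 1)) :
    (∀ ζ ∈ Metric.sphere (0 : ℂ) 1, ∃ r : ℝ, f ζ = (r : ℂ) * ζ ^ k) ↔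
      ∃ a : ℕ → ℂ,
        (∀ j ≤ 2 * k, a (2 * k - j) = (starRingEnd ℂ) (a j)) ∧
        ∀ z ∈ Metric.closedBall (0 : ℂ) 1,
          f z = ∑ j ∈ Finset.range (2 * k + 1), a j * z ^ j := by
  constructor
  · refine exists_coeff_of_boundary k f ⟨hfd, ?_⟩
    rwa [closure_ball _ one_ne_zero]
  · rintro ⟨a, ha, hs⟩ ζ hζ
    rw [hs ζ (sphere_subset_closedBall hζ)]
    exact exists_real_of_conj hζ k (conj_sum_mul_pow hζ k a ha)
end

section
/- Let k ≥ 0 be an integer and let f : 𝔻̄ → ℂ be continuous on the closed unit disc, holomorphic on the open unit disc, satisfying the index-k boundary condition, and not identically zero on 𝔻̄. Then the set {ζ ∈ ∂𝔻 : f(ζ) = 0} of boundary zeros of f has at most 2k elements; in particular it is finite. -/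
/-!
Since `f ζ = r ζ ^ k` with `r` real, `f ζ = ζ ^ (2k) * conj (f ζ)` on the unit circle, so the
Fourier coefficients of `f` satisfy `a (2k - n) = conj (a n)`. Holomorphy kills the coefficients of
negative index (Cauchy's theorem), hence also those of index greater than `2k`
(`cauchyPowerSeries_coeff_eq_zero`). Therefore `f` is a polynomial of degree at most `2k` on the open
disc and, by continuity, on the closed disc (`exists_polynomial_eqOn`). It is not the zero
polynomial, so it has at most `2k` roots.
-/

open Metric in
/-- The Taylor coefficients of index greater than `2k` vanish: on the unit circle
`ζ ^ (-(2k + 1 + m)) * f ζ` is the complex conjugate of `ζ ^ (m + 1) * f ζ`, and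
`∮ ζ ^ m * f ζ = 0` by Cauchy's theorem. -/
lemma cauchyPowerSeries_coeff_eq_zero (k : ℕ) (f : ℂ → ℂ) (hf : DiffContOnCl ℂ f (ball 0 1))
    (hbc : ∀ ζ ∈ sphere (0 : ℂ) 1, ∃ r : ℝ, f ζ = (r : ℂ) * ζ ^ k) (m : ℕ) :
    (cauchyPowerSeries f 0 1).coeff (2 * k + 1 + m) = 0 := by
  have hcauchy : (∮ z in C(0, 1), z ^ m * f z) = 0 := by
    have hd : DiffContOnCl ℂ (fun z : ℂ => z ^ m * f z) (ball 0 1) :=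
      (differentiable_id.pow m).diffContOnCl.smul hf
    exact hd.circleIntegral_eq_zero zero_le_one
  have hmoment : ∫ θ in (0 : ℝ)..2 * Real.pi,
      circleMap 0 1 θ * (circleMap 0 1 θ ^ m * f (circleMap 0 1 θ)) = 0 := by
    rw [circleIntegral] at hcauchy
    simp only [deriv_circleMap, smul_eq_mul, mul_right_comm _ Complex.I] at hcauchy
    rw [intervalIntegral.integral_mul_const] at hcauchy
    exact (mul_eq_zero.mp hcauchy).resolve_right Complex.I_ne_zero
  rw [FormalMultilinearSeries.coeff]
  change (cauchyPowerSeries f 0 1 _) (fun _ => 1) = 0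
  rw [cauchyPowerSeries_apply, circleIntegral]
  refine smul_eq_zero_of_right _ ?_
  have hpt : ∀ θ : ℝ, deriv (circleMap 0 1) θ •
      ((1 : ℂ) / (circleMap 0 1 θ - 0)) ^ (2 * k + 1 + m) •
        (circleMap 0 1 θ - 0)⁻¹ • f (circleMap 0 1 θ) =
      (starRingEnd ℂ) (circleMap 0 1 θ * (circleMap 0 1 θ ^ m * f (circleMap 0 1 θ))) *
        Complex.I := by
    intro θ
    have hz : circleMap 0 1 θ ∈ sphere (0 : ℂ) 1 := circleMap_mem_sphere 0 zero_le_one θ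
    rw [deriv_circleMap]
    generalize circleMap 0 1 θ = z at hz
    obtain ⟨r, hr⟩ := hbc z hz
    have hn : ‖z‖ = 1 := by simpa using hz
    have hz0 : z ≠ 0 := by
      rintro rfl
      simp at hn
    rw [hr]
    simp only [smul_eq_mul, sub_zero, map_mul, map_pow, Complex.conj_ofReal,
      ← Complex.inv_eq_conj hn, one_div, inv_pow]
    field_simp
    ring
  simp_rw [hpt]
  rw [intervalIntegral.integral_mul_const, intervalIntegral.intervalIntegral_conj, hmoment]
  simp

open Metric Polynomial in
lemma exists_polynomial_eqOn (k : ℕ) (f : ℂ → ℂ) (hf : DiffContOnCl ℂ f (ball 0 1))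
    (hbc : ∀ ζ ∈ sphere (0 : ℂ) 1, ∃ r : ℝ, f ζ = (r : ℂ) * ζ ^ k) :
    ∃ p : ℂ[X], p.natDegree ≤ 2 * k ∧ Set.EqOn f (fun z => p.eval z) (closedBall 0 1) := by
  set a := (cauchyPowerSeries f 0 1).coeff with ha
  refine ⟨∑ n ∈ Finset.range (2 * k + 1), C (a n) * X ^ n, ?_, ?_⟩
  · refine natDegree_sum_le_of_forall_le _ _ fun n hn => ?_
    exact (natDegree_C_mul_X_pow_le _ _).trans (by have := Finset.mem_range.mp hn; omega)
  · have hball : Set.EqOn f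
        (fun z => (∑ n ∈ Finset.range (2 * k + 1), C (a n) * X ^ n).eval z) (ball 0 1) := by
      intro z hz
      have hps := DiffContOnCl.hasFPowerSeriesOnBall (R := 1) (by simpa using hf) one_pos
      have hs := hps.hasSum (y := z) (by
        rw [Metric.eball_coe]
        exact hz)
      simp only [zero_add, FormalMultilinearSeries.apply_eq_pow_smul_coeff, NNReal.coe_one, ← ha] at hs
      refine hs.unique ?_
      have hfin := hasSum_sum_of_ne_finset_zero (L := .unconditional ℕ)
        (f := fun n => z ^ n • a n)
        (s := Finset.range (2 * k + 1)) (fun n hn => by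
          obtain ⟨m, rfl⟩ := Nat.exists_eq_add_of_le (not_lt.mp (mt Finset.mem_range.mpr hn))
          simp only [ha, cauchyPowerSeries_coeff_eq_zero k f hf hbc m, smul_zero])
      simpa only [eval_finsetSum, eval_mul, eval_C, eval_pow, eval_X, smul_eq_mul,
        mul_comm (a _)] using hfin
    have hcl : closure (ball (0 : ℂ) 1) = closedBall 0 1 := closure_ball 0 one_ne_zero
    refine hball.of_subset_closure (hcl ▸ hf.continuousOn) (by fun_prop)
      ball_subset_closedBall hcl.ge

/-- A function continuous on the closed unit disc, holomorphic on the open disc,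
satisfying the index-`k` boundary condition and not identically zero, has at most `2k`
zeros on the unit circle; in particular its set of boundary zeros is finite. -/
theorem index_k_boundary_zeros_finite (k : ℕ) (f : ℂ → ℂ)
    (hfc : ContinuousOn f (Metric.closedBall (0 : ℂ) 1))
    (hfd : DifferentiableOn ℂ f (Metric.ball (0 : ℂ) 1))
    (hbc : ∀ ζ ∈ Metric.sphere (0 : ℂ) 1, ∃ r : ℝ, f ζ = (r : ℂ) * ζ ^ k)
    (hne : ∃ z ∈ Metric.closedBall (0 : ℂ) 1, f z ≠ 0) :
    {ζ ∈ Metric.sphere (0 : ℂ) 1 | f ζ = 0}.Finite ∧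
      {ζ ∈ Metric.sphere (0 : ℂ) 1 | f ζ = 0}.ncard ≤ 2 * k := by
  have hcl : closure (Metric.ball (0 : ℂ) 1) = Metric.closedBall 0 1 :=
    closure_ball 0 one_ne_zero
  obtain ⟨p, hdeg, hp⟩ := exists_polynomial_eqOn k f ⟨hfd, hcl ▸ hfc⟩ hbc
  have hp0 : p ≠ 0 := by
    rintro rfl
    obtain ⟨z, hz, hfz⟩ := hne
    exact hfz (by simpa using hp hz)
  have hsub : {ζ ∈ Metric.sphere (0 : ℂ) 1 | f ζ = 0} ⊆ (p.roots.toFinset : Set ℂ) := by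
    rintro ζ ⟨hζ, hfζ⟩
    have hroot : p.eval ζ = 0 := (hp (Metric.sphere_subset_closedBall hζ)).symm.trans hfζ
    simpa [hp0] using hroot
  refine ⟨(Finset.finite_toSet _).subset hsub, ?_⟩
  calc _ ≤ (p.roots.toFinset : Set ℂ).ncard := Set.ncard_le_ncard hsub (Finset.finite_toSet _)
    _ = p.roots.toFinset.card := Set.ncard_coe_finset _
    _ ≤ p.roots.card := Multiset.toFinset_card_le _
    _ ≤ p.natDegree := p.card_roots'
    _ ≤ 2 * k := hdeg
end

section
/- Let n be a positive integer, let k₁, …, k_n be integers with k_i ≥ 1 for all i, and for each i let f_i : 𝔻̄ → ℂ be continuous on the closed unit disc, holomorphic on the open unit disc, satisfying the index-k_i boundary condition, and not identically zero on 𝔻̄. Then there exists a point ζ ∈ ∂𝔻 such that f_i(ζ) ≠ 0 for every i = 1, …, n. -/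
/-! If every point of the unit circle were a zero of some `fᵢ`, the product `∏ fᵢ` would vanish
on the circle, hence on the closed disc by the maximum modulus principle. Holomorphic functions
on the (connected) disc form a domain, so some `fᵢ` would vanish on the open disc, and by
continuity on the closed disc, contradicting `fᵢ ≢ 0`. -/

/-- Holomorphic functions on a connected open set have no zero divisors, for finite products. -/
lemma exists_eqOn_zero_of_prod_eqOn_zero {ι : Type*} {U : Set ℂ} (hU : IsOpen U)
    (hUc : IsPreconnected U) (hUn : U.Nonempty) (f : ι → ℂ → ℂ)
    (hf : ∀ i, DifferentiableOn ℂ (f i) U) (s : Finset ι)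
    (h : ∀ z ∈ U, ∏ i ∈ s, f i z = 0) : ∃ i ∈ s, ∀ z ∈ U, f i z = 0 := by
  classical
  induction s using Finset.induction_on with
  | empty =>
    obtain ⟨z, hz⟩ := hUn
    simpa using h z hz
  | insert a s ha ih =>
    have hprod : DifferentiableOn ℂ (fun z => ∏ i ∈ s, f i z) U :=
      DifferentiableOn.fun_finsetProd fun i _ => hf i
    have key := AnalyticOnNhd.eq_zero_or_eq_zero_of_mul_eq_zero
      ((hf a).analyticOnNhd hU) (hprod.analyticOnNhd hU)
      (fun z hz => by simpa [Finset.prod_insert ha] using h z hz) hUc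
    rcases key with h0 | h0
    · exact ⟨a, Finset.mem_insert_self a s, h0⟩
    · obtain ⟨i, hi, hi0⟩ := ih h0
      exact ⟨i, Finset.mem_insert_of_mem hi, hi0⟩


/-- Given finitely many functions `fᵢ`, continuous on the closed unit disc, holomorphic
on the open disc, each satisfying an index-`kᵢ` boundary condition with `kᵢ ≥ 1` and not
identically zero, there is a common point of the unit circle where all `fᵢ` are
nonzero. -/
theorem exists_common_nonvanishing_boundary_point (n : ℕ) (hn : 0 < n)
    (k : Fin n → ℤ) (hk : ∀ i, 1 ≤ k i) (f : Fin n → ℂ → ℂ)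
    (hfc : ∀ i, ContinuousOn (f i) (Metric.closedBall (0 : ℂ) 1))
    (hfd : ∀ i, DifferentiableOn ℂ (f i) (Metric.ball (0 : ℂ) 1))
    (hbc : ∀ i, ∀ ζ ∈ Metric.sphere (0 : ℂ) 1, ∃ r : ℝ, f i ζ = (r : ℂ) * ζ ^ (k i))
    (hne : ∀ i, ∃ z ∈ Metric.closedBall (0 : ℂ) 1, f i z ≠ 0) :
    ∃ ζ ∈ Metric.sphere (0 : ℂ) 1, ∀ i, f i ζ ≠ 0 := by
  by_contra! hcon
  have hcl : closure (Metric.ball (0 : ℂ) 1) = Metric.closedBall 0 1 :=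
    closure_ball 0 one_ne_zero
  have hFd : DiffContOnCl ℂ (fun z => ∏ i, f i z) (Metric.ball (0 : ℂ) 1) := by
    refine ⟨DifferentiableOn.fun_finsetProd fun i _ => hfd i, ?_⟩
    rw [hcl]
    exact continuousOn_finsetProd _ fun i _ => hfc i
  have hF0 : Set.EqOn (fun z => ∏ i, f i z) (fun _ => 0) (Metric.ball (0 : ℂ) 1) := by
    refine Complex.eqOn_of_eqOn_frontier Metric.isBounded_ball hFd diffContOnCl_const ?_
    rw [frontier_ball 0 one_ne_zero]
    intro ζ hζ
    obtain ⟨i, hi⟩ := hcon ζ hζ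
    exact Finset.prod_eq_zero (Finset.mem_univ i) hi
  obtain ⟨i, -, hi⟩ := exists_eqOn_zero_of_prod_eqOn_zero Metric.isOpen_ball
    (convex_ball (0 : ℂ) 1).isPreconnected (Metric.nonempty_ball.2 one_pos) f hfd
    Finset.univ hF0
  have hi' : Set.EqOn (f i) (fun _ => 0) (Metric.closedBall (0 : ℂ) 1) :=
    Set.EqOn.of_subset_closure hi (hfc i) continuousOn_const
      Metric.ball_subset_closedBall hcl.ge
  obtain ⟨z, hz, hz0⟩ := hne i
  exact hz0 (hi' hz)
end

section
/- Let k ≥ 1 be an integer and let f : 𝔻̄ → ℂ be continuous on the closed unit disc and holomorphic on the open unit disc. If f satisfies the index-(−k) boundary condition, i.e., for every ζ ∈ ∂𝔻 the number ζ^k·f(ζ) is real, then f is identically zero on 𝔻̄. (Equivalently: a holomorphic function on the disc whose boundary values lie in the rotating real lines ζ^{−k}·ℝ with negative winding must vanish.) -/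
/-!
Put `g z = z ^ k * f z`, which is real on the unit circle and vanishes at `0` because `k ≥ 1`.
The maximum principle for `exp (± i g)`, which has modulus `1` on the circle, gives `Im g = 0` on
the whole closed disc (`im_eq_zero_of_im_eq_zero_on_sphere`). Then `(g + i)⁻¹` has modulus
at most `1`, attained at `0`, so it is constant and `g = 0` (`eq_zero_of_im_eq_zero`). Hence `f`
vanishes on the circle, and by the maximum principle on the closed disc.
-/

open Metric

lemma im_eq_zero_of_im_eq_zero_on_sphere {g : ℂ → ℂ} (hg : DiffContOnCl ℂ g (ball (0 : ℂ) 1))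
    (hb : ∀ z ∈ sphere (0 : ℂ) 1, (g z).im = 0) :
    ∀ z ∈ closedBall (0 : ℂ) 1, (g z).im = 0 := by
  have key : ∀ c : ℝ, ∀ z ∈ closedBall (0 : ℂ) 1, -(c * (g z).im) ≤ 0 := by
    intro c z hz
    have hnorm : ∀ w, ‖Complex.exp ((c * Complex.I) * g w)‖ = Real.exp (-(c * (g w).im)) := by
      intro w
      rw [Complex.norm_exp]
      simp
    have hd : DiffContOnCl ℂ (fun w => Complex.exp ((c * Complex.I) * g w)) (ball (0 : ℂ) 1) :=
      Complex.differentiable_exp.comp_diffContOnCl (hg.const_smul (c * Complex.I))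
    have h := Complex.norm_le_of_forall_mem_frontier_norm_le (C := 1) isBounded_ball hd
      (fun w hw => by
        rw [frontier_ball _ one_ne_zero] at hw
        rw [hnorm, hb w hw]
        simp)
      (by rwa [closure_ball _ one_ne_zero] : z ∈ closure (ball (0 : ℂ) 1))
    rw [hnorm] at h
    exact Real.exp_le_one_iff.mp h
  intro z hz
  have h1 := key 1 z hz
  have h2 := key (-1) z hz
  linarith

lemma eq_zero_of_im_eq_zero {g : ℂ → ℂ} (hg : DiffContOnCl ℂ g (ball (0 : ℂ) 1))
    (h0 : g 0 = 0) (him : ∀ z ∈ closedBall (0 : ℂ) 1, (g z).im = 0) :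
    ∀ z ∈ closedBall (0 : ℂ) 1, g z = 0 := by
  have hone : ∀ z ∈ closedBall (0 : ℂ) 1, 1 ≤ ‖g z + Complex.I‖ := by
    intro z hz
    have h := Complex.abs_im_le_norm (g z + Complex.I)
    simpa [him z hz] using h
  have hne : ∀ z ∈ closedBall (0 : ℂ) 1, g z + Complex.I ≠ 0 := by
    intro z hz h
    have := hone z hz
    rw [h, norm_zero] at this
    linarith
  have hd : DiffContOnCl ℂ (fun z => g z + Complex.I)⁻¹ (ball (0 : ℂ) 1) :=
    (hg.add_const Complex.I).inv (by rwa [closure_ball _ one_ne_zero])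
  have hmax : IsMaxOn (norm ∘ (fun z => g z + Complex.I)⁻¹) (ball (0 : ℂ) 1) 0 := by
    intro z hz
    simpa [h0] using inv_le_one_of_one_le₀ (hone z (ball_subset_closedBall hz))
  intro z hz
  have h := Complex.eqOn_closedBall_of_isMaxOn_norm hd hmax hz
  simpa [h0] using inv_injective h

/-- A function continuous on the closed unit disc and holomorphic on the open disc whose
boundary values satisfy the index-`(-k)` boundary condition with `k ≥ 1` (i.e.
`ζ^k · f(ζ)` is real on the unit circle) vanishes identically on the closed disc. -/
theorem index_neg_k_boundary_condition_vanishes (k : ℕ) (hk : 1 ≤ k) (f : ℂ → ℂ)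
    (hfc : ContinuousOn f (Metric.closedBall (0 : ℂ) 1))
    (hfd : DifferentiableOn ℂ f (Metric.ball (0 : ℂ) 1))
    (hbc : ∀ ζ ∈ Metric.sphere (0 : ℂ) 1, ∃ r : ℝ, ζ ^ k * f ζ = (r : ℂ)) :
    ∀ z ∈ Metric.closedBall (0 : ℂ) 1, f z = 0 := by
  have hf : DiffContOnCl ℂ f (ball (0 : ℂ) 1) :=
    ⟨hfd, by rwa [closure_ball _ one_ne_zero]⟩
  have hg : DiffContOnCl ℂ (fun z => z ^ k * f z) (ball (0 : ℂ) 1) :=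
    (differentiable_pow k).diffContOnCl.smul hf
  have hg0 := eq_zero_of_im_eq_zero hg (by simp [show k ≠ 0 by omega])
    (im_eq_zero_of_im_eq_zero_on_sphere hg fun z hz => by
      obtain ⟨r, hr⟩ := hbc z hz
      simp only [hr, Complex.ofReal_im])
  intro z hz
  refine Complex.eqOn_closure_of_eqOn_frontier (g := fun _ => 0) isBounded_ball hf
    diffContOnCl_const (fun w hw => ?_) (by rwa [closure_ball _ one_ne_zero])
  rw [frontier_ball _ one_ne_zero] at hw
  exact (mul_eq_zero.mp (hg0 w (sphere_subset_closedBall hw))).resolve_left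
    (pow_ne_zero k (ne_zero_of_mem_unit_sphere ⟨w, hw⟩))
end

section
/- Let N be a positive integer and let u : ℂ → ℝ^N be continuously differentiable on a neighborhood of the closed unit disc 𝔻̄, with ∂₁u(z) = Du(z)(1) and ∂₂u(z) = Du(z)(i). Then equality ∫_𝔻 √(‖∂₁u‖²·‖∂₂u‖² − ⟨∂₁u, ∂₂u⟩²) dz = ½ ∫_𝔻 (‖∂₁u‖² + ‖∂₂u‖²) dz holds if and only if u is conformal on 𝔻, that is, for every z ∈ 𝔻 one has ‖∂₁u(z)‖ = ‖∂₂u(z)‖ and ⟨∂₁u(z), ∂₂u(z)⟩ = 0. -/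
/-!
With `a = ‖∂₁u‖`, `b = ‖∂₂u‖`, `c = ⟪∂₁u, ∂₂u⟫`, the identity
`((a² + b²) / 2)² - (a² b² - c²) = ((a² - b²) / 2)² + c²` shows that the area density is bounded by
the Dirichlet density pointwise, with equality exactly at the points where `u` is conformal.
Both densities are continuous on the closed disc, hence integrable, so equality of the integrals
forces equality almost everywhere, and by continuity everywhere on the open disc.
-/

open scoped RealInnerProductSpace
open MeasureTheory

lemma area_density_le {E : Type*} [NormedAddCommGroup E] [InnerProductSpace ℝ E] (x y : E) :
    Real.sqrt (‖x‖ ^ 2 * ‖y‖ ^ 2 - ⟪x, y⟫ ^ 2) ≤ (1 / 2) * (‖x‖ ^ 2 + ‖y‖ ^ 2) := by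
  refine Real.sqrt_le_iff.mpr ⟨by positivity, ?_⟩
  nlinarith [sq_nonneg (‖x‖ ^ 2 - ‖y‖ ^ 2), sq_nonneg ⟪x, y⟫]

lemma area_density_eq_iff {E : Type*} [NormedAddCommGroup E] [InnerProductSpace ℝ E] (x y : E) :
    Real.sqrt (‖x‖ ^ 2 * ‖y‖ ^ 2 - ⟪x, y⟫ ^ 2) = (1 / 2) * (‖x‖ ^ 2 + ‖y‖ ^ 2) ↔
      ‖x‖ = ‖y‖ ∧ ⟪x, y⟫ = 0 := by
  -- Cauchy–Schwarz: the radicand is nonnegative, so the square root is genuine.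
  have hcs : 0 ≤ ‖x‖ ^ 2 * ‖y‖ ^ 2 - ⟪x, y⟫ ^ 2 := by
    have h := sq_le_sq' (neg_le_of_abs_le (abs_real_inner_le_norm x y)) (real_inner_le_norm x y)
    rw [mul_pow] at h
    linarith
  rw [Real.sqrt_eq_iff_mul_self_eq hcs (by positivity)]
  constructor
  · intro h
    have hsum : (‖x‖ ^ 2 - ‖y‖ ^ 2) ^ 2 + 4 * ⟪x, y⟫ ^ 2 = 0 := by linear_combination (-4) * h
    have h1 : (‖x‖ ^ 2 - ‖y‖ ^ 2) ^ 2 = 0 := by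
      nlinarith [sq_nonneg (‖x‖ ^ 2 - ‖y‖ ^ 2), sq_nonneg ⟪x, y⟫]
    have h2 : ⟪x, y⟫ ^ 2 = 0 := by linarith
    refine ⟨?_, pow_eq_zero_iff two_ne_zero |>.mp h2⟩
    have h3 := pow_eq_zero_iff two_ne_zero |>.mp h1
    exact (sq_eq_sq₀ (norm_nonneg _) (norm_nonneg _)).mp (by linarith)
  · rintro ⟨h1, h2⟩
    rw [h1, h2]
    ring

/-- **Equality of area and Dirichlet energy characterizes conformality**: for a map `u`
of class `C¹` on a neighborhood of the closed unit disc with values in `ℝ^N`, writing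
`∂₁u = Du(1)` and `∂₂u = Du(i)`, the area integral equals the Dirichlet integral if and
only if `u` is conformal on the open disc, i.e. `‖∂₁u(z)‖ = ‖∂₂u(z)‖` and
`⟪∂₁u(z), ∂₂u(z)⟫ = 0` for every `z` in the open unit disc. -/
theorem area_eq_dirichlet_iff_conformal (N : ℕ) (hN : 0 < N)
    (u : ℂ → EuclideanSpace ℝ (Fin N)) (U : Set ℂ) (hU : IsOpen U)
    (hUD : Metric.closedBall (0 : ℂ) 1 ⊆ U) (hu : ContDiffOn ℝ 1 u U) :
    (∫ z in Metric.ball (0 : ℂ) 1,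
        Real.sqrt (‖fderiv ℝ u z 1‖ ^ 2 * ‖fderiv ℝ u z Complex.I‖ ^ 2 -
          ⟪fderiv ℝ u z 1, fderiv ℝ u z Complex.I⟫ ^ 2)) =
      (1 / 2) * (∫ z in Metric.ball (0 : ℂ) 1,
        (‖fderiv ℝ u z 1‖ ^ 2 + ‖fderiv ℝ u z Complex.I‖ ^ 2)) ↔
    ∀ z ∈ Metric.ball (0 : ℂ) 1,
      ‖fderiv ℝ u z 1‖ = ‖fderiv ℝ u z Complex.I‖ ∧
        ⟪fderiv ℝ u z 1, fderiv ℝ u z Complex.I⟫ = 0 := by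
  have hD : ContinuousOn (fun z => fderiv ℝ u z) (Metric.closedBall (0 : ℂ) 1) :=
    (hu.continuousOn_fderiv_of_isOpen hU le_rfl).mono hUD
  have h1 : ContinuousOn (fun z => fderiv ℝ u z 1) (Metric.closedBall (0 : ℂ) 1) :=
    hD.clm_apply continuousOn_const
  have h2 : ContinuousOn (fun z => fderiv ℝ u z Complex.I) (Metric.closedBall (0 : ℂ) 1) :=
    hD.clm_apply continuousOn_const
  have hA : ContinuousOn (fun z => Real.sqrt (‖fderiv ℝ u z 1‖ ^ 2 * ‖fderiv ℝ u z Complex.I‖ ^ 2 -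
      ⟪fderiv ℝ u z 1, fderiv ℝ u z Complex.I⟫ ^ 2)) (Metric.closedBall (0 : ℂ) 1) :=
    (((h1.norm.pow 2).mul (h2.norm.pow 2)).sub ((ContinuousOn.inner (𝕜 := ℝ) h1 h2).pow 2)).sqrt
  have hE : ContinuousOn (fun z => (1 / 2) * (‖fderiv ℝ u z 1‖ ^ 2 + ‖fderiv ℝ u z Complex.I‖ ^ 2))
      (Metric.closedBall (0 : ℂ) 1) :=
    continuousOn_const.mul ((h1.norm.pow 2).add (h2.norm.pow 2))
  have hsub := Metric.ball_subset_closedBall (x := (0 : ℂ)) (ε := 1)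
  have hcpt := isCompact_closedBall (0 : ℂ) 1
  rw [← integral_const_mul,
    integral_eq_iff_of_ae_le ((hA.integrableOn_compact hcpt).mono_set hsub)
      ((hE.integrableOn_compact hcpt).mono_set hsub)
      (Filter.Eventually.of_forall fun z => area_density_le _ _)]
  constructor
  · intro h z hz
    exact (area_density_eq_iff _ _).mp
      (Measure.eqOn_open_of_ae_eq h Metric.isOpen_ball (hA.mono hsub) (hE.mono hsub) hz)
  · intro h
    filter_upwards [ae_restrict_mem measurableSet_ball] with z hz
    exact (area_density_eq_iff _ _).mpr (h z hz)
end
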